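/- arXiv:2110.14387 — 9 statements merged into one kernel-verified Lean document; each statement's English description precedes it below -/
import Mathlib

section
/- Let A be a unital C*-algebra whose set of tracial states T(A) is nonempty, let G be a discrete group, let α be an action of G on A, and suppose there is an integer M ≥ 1 such that every orbit of the induced action α* on T(A) is finite with at most M elements. Then for every a ∈ A one has ‖a‖_{2,T(A)^α} ≤ ‖a‖_{2,u} ≤ M^{1/2} · ‖a‖_{2,T(A)^α}; in particular the seminorms ‖·‖_{2,T(A)^α} and ‖·‖_{2,u} are equivalent. -/
open scoped ComplexOrder

/-- A tracial state on a unital C*-algebra `A`: a continuous linear functional `τ` with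
`τ 1 = 1`, `τ (a* a) ≥ 0` for all `a`, and `τ (a b) = τ (b a)` for all `a b`. -/
def IsTracialState {A : Type*} [NormedRing A] [StarRing A] [NormedAlgebra ℂ A]
    (τ : A →L[ℂ] ℂ) : Prop :=
  τ 1 = 1 ∧ (∀ a : A, 0 ≤ τ (star a * a)) ∧ ∀ a b : A, τ (a * b) = τ (b * a)

/-- The orbit `{τ ∘ α_g : g ∈ G}` of a functional `τ` under an action `α` of `G` on `A`. -/
def traceOrbit {A : Type*} [NormedRing A] [StarRing A] [NormedAlgebra ℂ A]
    {G : Type*} (α : G → A ≃⋆ₐ[ℂ] A) (τ : A →L[ℂ] ℂ) : Set (A →L[ℂ] ℂ) :=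
  {σ | ∃ g : G, ∀ a : A, σ a = τ (α g a)}

/-!
If `τ` is a tracial state with finite orbit `S`, precomposition with each `α g` is an injective
self-map of `S`, hence a permutation, so the average `σ` of `S` is an invariant tracial state.
On positive elements `τ` is one of the nonnegative summands of `|S| • σ`, so that
`τ (a* a) ≤ |S| σ (a* a) ≤ M σ (a* a)`; it remains to take square roots and suprema.
-/

open scoped BigOperators CStarAlgebra

section Functional

variable {E : Type*} [AddCommMonoid E] [Module ℂ E] [TopologicalSpace E]

theorem expect_functional_apply (S : Finset (E →L[ℂ] ℂ)) (x : E) :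
    (𝔼 σ ∈ S, σ) x = 𝔼 σ ∈ S, σ x := by
  simp [Finset.expect]

theorem re_apply_le_card_mul_re_expect_apply {S : Finset (E →L[ℂ] ℂ)} {x : E}
    (hS : ∀ σ ∈ S, 0 ≤ (σ x).re) {τ : E →L[ℂ] ℂ} (hτ : τ ∈ S) :
    (τ x).re ≤ S.card * ((𝔼 σ ∈ S, σ) x).re := by
  calc (τ x).re
      ≤ ∑ σ ∈ S, (σ x).re :=
        Finset.single_le_sum (f := fun σ : E →L[ℂ] ℂ => (σ x).re) hS hτ
    _ = (S.card • 𝔼 σ ∈ S, σ x).re := by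
        rw [Finset.card_smul_expect, Complex.re_sum]
    _ = S.card * ((𝔼 σ ∈ S, σ) x).re := by
        rw [expect_functional_apply, Complex.re_nsmul, nsmul_eq_mul]

end Functional

section NormedAlgebra

variable {A : Type*} [NormedRing A] [StarRing A] [NormedAlgebra ℂ A]

theorem IsTracialState.re_apply_star_mul_self_nonneg {τ : A →L[ℂ] ℂ} (hτ : IsTracialState τ)
    (a : A) : 0 ≤ (τ (star a * a)).re :=
  (Complex.nonneg_iff.1 (hτ.2.1 a)).1

theorem IsTracialState.expect {S : Finset (A →L[ℂ] ℂ)} (hne : S.Nonempty)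
    (hS : ∀ σ ∈ S, IsTracialState σ) : IsTracialState (𝔼 σ ∈ S, σ) := by
  simp only [IsTracialState, expect_functional_apply]
  refine ⟨?_, fun a => Finset.expect_nonneg fun σ hσ => (hS σ hσ).2.1 a,
    fun a b => Finset.expect_congr rfl fun σ hσ => (hS σ hσ).2.2 a b⟩
  rw [Finset.expect_congr rfl fun σ hσ => (hS σ hσ).1, Finset.expect_const hne]

variable (A) in
/-- The set `T(A)` of tracial states of `A`. -/
def tracialStates : Set (A →L[ℂ] ℂ) :=
  {τ | IsTracialState τ}

/-- The set `T(A)^α` of `α`-invariant tracial states of `A`. -/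
def invariantTracialStates {G : Type*} (α : G → A ≃⋆ₐ[ℂ] A) : Set (A →L[ℂ] ℂ) :=
  {τ | IsTracialState τ ∧ ∀ (g : G) (b : A), τ (α g b) = τ b}

theorem invariantTracialStates_subset_tracialStates {G : Type*} (α : G → A ≃⋆ₐ[ℂ] A) :
    invariantTracialStates α ⊆ tracialStates A :=
  fun _ hτ => hτ.1

/-- The average `τ^α` of a functional over its finite orbit. -/
noncomputable def orbitAverage {G : Type*} {α : G → A ≃⋆ₐ[ℂ] A} {τ : A →L[ℂ] ℂ}
    (hfin : (traceOrbit α τ).Finite) : A →L[ℂ] ℂ :=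
  𝔼 σ ∈ hfin.toFinset, σ

/-- The seminorm `‖a‖_{2,T} = sup_{τ ∈ T} τ(a* a)^{1/2}` of a set `T` of tracial states, with
junk value `0` when `T` is empty or the supremum is infinite. -/
noncomputable def uniformTwoNorm (T : Set (A →L[ℂ] ℂ)) (a : A) : ℝ :=
  sSup {r : ℝ | ∃ τ ∈ T, r = √(τ (star a * a)).re}

end NormedAlgebra

section CStarAlgebra

variable {A B : Type*} [CStarAlgebra A] [CStarAlgebra B]

theorem IsTracialState.re_apply_star_mul_self_le_norm_sq {τ : A →L[ℂ] ℂ} (hτ : IsTracialState τ)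
    (a : A) : (τ (star a * a)).re ≤ ‖a‖ ^ 2 := by
  let _ : PartialOrder A := CStarAlgebra.spectralOrder A
  have : StarOrderedRing A := CStarAlgebra.spectralOrderedRing A
  obtain ⟨b, hb⟩ : ∃ b : A, algebraMap ℝ A (‖a‖ ^ 2) - star a * a = star b * b :=
    CStarAlgebra.nonneg_iff_eq_star_mul_self.1
      (sub_nonneg.2 CStarAlgebra.star_mul_le_algebraMap_norm_sq)
  have hτ_algebraMap : τ (algebraMap ℝ A (‖a‖ ^ 2)) = (‖a‖ ^ 2 : ℝ) := by
    rw [Algebra.algebraMap_eq_smul_one, ← Complex.coe_smul, map_smul, hτ.1, smul_eq_mul, mul_one]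
  have hnonneg := hτ.re_apply_star_mul_self_nonneg b
  rwa [← hb, map_sub, hτ_algebraMap, Complex.sub_re, Complex.ofReal_re, sub_nonneg] at hnonneg

theorem bddAbove_sqrt_re_apply_star_mul_self {T : Set (A →L[ℂ] ℂ)} (hT : T ⊆ tracialStates A)
    (a : A) : BddAbove {r : ℝ | ∃ τ ∈ T, r = √(τ (star a * a)).re} := by
  refine ⟨‖a‖, ?_⟩
  rintro _ ⟨τ, hτ, rfl⟩
  exact Real.sqrt_le_iff.2 ⟨norm_nonneg a, (hT hτ).re_apply_star_mul_self_le_norm_sq a⟩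

theorem uniformTwoNorm_mono {S T : Set (A →L[ℂ] ℂ)} (hS : S.Nonempty) (hST : S ⊆ T)
    (hT : T ⊆ tracialStates A) (a : A) : uniformTwoNorm S a ≤ uniformTwoNorm T a := by
  obtain ⟨σ, hσ⟩ := hS
  refine csSup_le_csSup (bddAbove_sqrt_re_apply_star_mul_self hT a) ⟨_, σ, hσ, rfl⟩ ?_
  rintro _ ⟨τ, hτ, rfl⟩
  exact ⟨τ, hST hτ, rfl⟩

theorem uniformTwoNorm_le_sqrt_mul {S T : Set (A →L[ℂ] ℂ)} (hS : S ⊆ tracialStates A)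
    (hT : T.Nonempty) {c : ℝ} {a : A}
    (hle : ∀ τ ∈ T, ∃ σ ∈ S, (τ (star a * a)).re ≤ c * (σ (star a * a)).re) :
    uniformTwoNorm T a ≤ √c * uniformTwoNorm S a := by
  obtain ⟨τ₀, hτ₀⟩ := hT
  refine csSup_le ⟨_, τ₀, hτ₀, rfl⟩ ?_
  rintro _ ⟨τ, hτ, rfl⟩
  obtain ⟨σ, hσ, hτσ⟩ := hle τ hτ
  calc √(τ (star a * a)).re
      ≤ √(c * (σ (star a * a)).re) := Real.sqrt_le_sqrt hτσ
    _ = √c * √(σ (star a * a)).re :=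
        Real.sqrt_mul' c ((hS hσ).re_apply_star_mul_self_nonneg a)
    _ ≤ √c * uniformTwoNorm S a := by
        gcongr
        exact le_csSup (bddAbove_sqrt_re_apply_star_mul_self hS a) ⟨σ, hσ, rfl⟩

section Pullback

variable {F : Type*} [FunLike F A B] [AlgHomClass F ℂ A B] [StarHomClass F A B]

/-- The functional `τ ∘ φ`, continuous because star homomorphisms of C⋆-algebras are. -/
noncomputable def pullbackFunctional (φ : F) (τ : B →L[ℂ] ℂ) : A →L[ℂ] ℂ where
  toLinearMap := τ.toLinearMap ∘ₗ (φ : A →ₗ[ℂ] B)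
  cont := τ.continuous.comp (map_continuous φ)

@[simp]
theorem pullbackFunctional_apply (φ : F) (τ : B →L[ℂ] ℂ) (a : A) :
    pullbackFunctional φ τ a = τ (φ a) :=
  rfl

theorem IsTracialState.pullbackFunctional (φ : F) {τ : B →L[ℂ] ℂ} (hτ : IsTracialState τ) :
    IsTracialState (pullbackFunctional φ τ) := by
  refine ⟨?_, fun a => ?_, fun a b => ?_⟩
  · rw [pullbackFunctional_apply, map_one, hτ.1]
  · rw [pullbackFunctional_apply, map_mul, map_star]
    exact hτ.2.1 (φ a)
  · rw [pullbackFunctional_apply, pullbackFunctional_apply, map_mul φ, map_mul φ, hτ.2.2]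

theorem pullbackFunctional_injective {φ : F} (hφ : Function.Surjective φ) :
    Function.Injective (pullbackFunctional φ) := fun τ σ h => by
  ext b
  obtain ⟨a, rfl⟩ := hφ b
  exact DFunLike.congr_fun h a

end Pullback

theorem expect_apply_map_of_mapsTo_pullbackFunctional {F : Type*} [FunLike F A A]
    [AlgHomClass F ℂ A A] [StarHomClass F A A] {φ : F} (hφ : Function.Surjective φ)
    {S : Finset (A →L[ℂ] ℂ)} (hS : Set.MapsTo (pullbackFunctional φ) S S) (a : A) :
    (𝔼 σ ∈ S, σ) (φ a) = (𝔼 σ ∈ S, σ) a := by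
  have hperm : Set.BijOn (pullbackFunctional φ) S S :=
    (S.finite_toSet.injOn_iff_bijOn_of_mapsTo hS).1 (pullbackFunctional_injective hφ).injOn
  rw [expect_functional_apply, expect_functional_apply]
  exact Finset.expect_nbij (pullbackFunctional φ) hperm.mapsTo (fun _ _ => rfl) hperm.injOn
    hperm.surjOn

section Orbit

variable {G : Type*} {τ : A →L[ℂ] ℂ}

theorem mem_traceOrbit_iff {α : G → A ≃⋆ₐ[ℂ] A} {σ : A →L[ℂ] ℂ} :
    σ ∈ traceOrbit α τ ↔ ∃ g, σ = pullbackFunctional (α g) τ :=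
  exists_congr fun g => (DFunLike.ext_iff (g := pullbackFunctional (α g) τ)).symm

theorem IsTracialState.of_mem_traceOrbit {α : G → A ≃⋆ₐ[ℂ] A} (hτ : IsTracialState τ)
    {σ : A →L[ℂ] ℂ} (hσ : σ ∈ traceOrbit α τ) : IsTracialState σ := by
  obtain ⟨g, rfl⟩ := mem_traceOrbit_iff.1 hσ
  exact hτ.pullbackFunctional (α g)

variable [Monoid G] {α : G →* (A ≃⋆ₐ[ℂ] A)}

theorem self_mem_traceOrbit : τ ∈ traceOrbit α τ :=
  ⟨1, fun a => by rw [map_one, StarAlgEquiv.one_apply]⟩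

theorem mapsTo_pullbackFunctional_traceOrbit (g : G) :
    Set.MapsTo (pullbackFunctional (α g)) (traceOrbit α τ) (traceOrbit α τ) := by
  rintro σ ⟨h, hσ⟩
  exact ⟨h * g, fun a => by
    rw [pullbackFunctional_apply, hσ, map_mul, StarAlgEquiv.mul_apply]⟩

theorem IsTracialState.orbitAverage_mem_invariantTracialStates (hτ : IsTracialState τ)
    (hfin : (traceOrbit α τ).Finite) : orbitAverage hfin ∈ invariantTracialStates α := by
  refine ⟨.expect ⟨τ, hfin.mem_toFinset.2 self_mem_traceOrbit⟩
    fun σ hσ => hτ.of_mem_traceOrbit (hfin.mem_toFinset.1 hσ), fun g => ?_⟩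
  refine expect_apply_map_of_mapsTo_pullbackFunctional (EquivLike.surjective (α g)) ?_
  rw [hfin.coe_toFinset]
  exact mapsTo_pullbackFunctional_traceOrbit g

theorem IsTracialState.re_apply_star_mul_self_le_ncard_mul_orbitAverage (hτ : IsTracialState τ)
    (hfin : (traceOrbit α τ).Finite) (a : A) :
    (τ (star a * a)).re ≤ (traceOrbit α τ).ncard * (orbitAverage hfin (star a * a)).re := by
  rw [Set.ncard_eq_toFinset_card _ hfin]
  refine re_apply_le_card_mul_re_expect_apply (fun σ hσ => ?_)
    (hfin.mem_toFinset.2 self_mem_traceOrbit)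
  exact (hτ.of_mem_traceOrbit (hfin.mem_toFinset.1 hσ)).re_apply_star_mul_self_nonneg a

end Orbit

theorem stmt0_general {G : Type*} [Monoid G] (α : G →* (A ≃⋆ₐ[ℂ] A))
    (hTA : (tracialStates A).Nonempty) (M : ℕ)
    (horb : ∀ τ ∈ tracialStates A,
      (traceOrbit α τ).Finite ∧ (traceOrbit α τ).ncard ≤ M) (a : A) :
    uniformTwoNorm (invariantTracialStates α) a ≤ uniformTwoNorm (tracialStates A) a ∧
      uniformTwoNorm (tracialStates A) a ≤ √M * uniformTwoNorm (invariantTracialStates α) a := by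
  have hsub := invariantTracialStates_subset_tracialStates α
  constructor
  · obtain ⟨τ, hτ⟩ := hTA
    have hne : (invariantTracialStates α).Nonempty :=
      ⟨_, IsTracialState.orbitAverage_mem_invariantTracialStates hτ (horb τ hτ).1⟩
    exact uniformTwoNorm_mono hne hsub subset_rfl a
  · refine uniformTwoNorm_le_sqrt_mul hsub hTA fun τ (hτ : IsTracialState τ) => ?_
    obtain ⟨hfin, hcard⟩ := horb τ hτ
    have havg := hτ.orbitAverage_mem_invariantTracialStates hfin
    refine ⟨orbitAverage hfin, havg, ?_⟩
    calc (τ (star a * a)).re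
        ≤ (traceOrbit α τ).ncard * (orbitAverage hfin (star a * a)).re :=
          hτ.re_apply_star_mul_self_le_ncard_mul_orbitAverage hfin a
      _ ≤ M * (orbitAverage hfin (star a * a)).re := by
          gcongr
          exact havg.1.re_apply_star_mul_self_nonneg a

end CStarAlgebra

/-- Let `A` be a unital C*-algebra with `T(A) ≠ ∅`, let `α` be an action
of a discrete group `G` on `A` by *-automorphisms whose induced action on `T(A)` has finite
orbits of cardinality at most `M ≥ 1`.  Then for every `a ∈ A`,
`‖a‖_{2,T(A)^α} ≤ ‖a‖_{2,u} ≤ √M ‖a‖_{2,T(A)^α}`, where `‖a‖_{2,T}` denotes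
`sup_{τ ∈ T} (τ (a* a))^{1/2}`. -/
theorem stmt0 {A : Type*} [NormedRing A] [StarRing A] [CStarRing A]
    [NormedAlgebra ℂ A] [CompleteSpace A] [StarModule ℂ A]
    {G : Type*} [Group G]
    (α : G → A ≃⋆ₐ[ℂ] A)
    (hα1 : ∀ a : A, α 1 a = a)
    (hαmul : ∀ (g h : G) (a : A), α (g * h) a = α g (α h a))
    (hTA : ∃ τ : A →L[ℂ] ℂ, IsTracialState τ)
    (M : ℕ) (hM : 1 ≤ M)
    (horb : ∀ τ : A →L[ℂ] ℂ, IsTracialState τ →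
      (traceOrbit α τ).Finite ∧ (traceOrbit α τ).ncard ≤ M) :
    ∀ a : A,
      sSup {r : ℝ | ∃ τ : A →L[ℂ] ℂ, IsTracialState τ ∧
          (∀ (g : G) (b : A), τ (α g b) = τ b) ∧ r = Real.sqrt (τ (star a * a)).re}
        ≤ sSup {r : ℝ | ∃ τ : A →L[ℂ] ℂ, IsTracialState τ ∧
          r = Real.sqrt (τ (star a * a)).re} ∧
      sSup {r : ℝ | ∃ τ : A →L[ℂ] ℂ, IsTracialState τ ∧
          r = Real.sqrt (τ (star a * a)).re}
        ≤ Real.sqrt M * sSup {r : ℝ | ∃ τ : A →L[ℂ] ℂ, IsTracialState τ ∧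
          (∀ (g : G) (b : A), τ (α g b) = τ b) ∧ r = Real.sqrt (τ (star a * a)).re} := by
  let _ : CStarAlgebra A := { }
  let β : G →* (A ≃⋆ₐ[ℂ] A) :=
    { toFun := α
      map_one' := StarAlgEquiv.ext hα1
      map_mul' := fun g h => StarAlgEquiv.ext (hαmul g h) }
  intro a
  simpa only [uniformTwoNorm, tracialStates, invariantTracialStates, Set.mem_ofPred_eq, and_assoc]
    using! stmt0_general β hTA M horb a
end

section
/- Let X be a compact Hausdorff space, let A and B be unital C*-algebras, let ζ_A : C(X,ℂ) → A and ζ_B : C(X,ℂ) → B be unital *-homomorphisms whose ranges lie in the centers of A and B respectively, and let φ : A → B be a unital *-homomorphism with φ ∘ ζ_A = ζ_B. Then φ is injective if and only if for every x ∈ X and every a ∈ A, φ(a) ∈ J_x(B) implies a ∈ J_x(A); that is, φ is injective precisely when every induced fiber map A/J_x(A) → B/J_x(B) is injective. -/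
/-- For a unital `C(X)`-algebra `(A, ζ)` and a point `x : X`, the ideal `J_x(A)`:
the closed linear span of `{ζ(f) · a : f ∈ C(X, ℂ), f(x) = 0, a ∈ A}`. -/
def fiberIdeal {X A : Type*} [TopologicalSpace X] [CompactSpace X] [T2Space X]
    [NormedRing A] [StarRing A] [NormedAlgebra ℂ A]
    (ζ : C(X, ℂ) →⋆ₐ[ℂ] A) (x : X) : Set A :=
  closure (Submodule.span ℂ
    {y : A | ∃ (f : C(X, ℂ)) (a : A), f x = 0 ∧ y = ζ f * a} : Set A)

/-!
For `a` in `A`, membership in `J_x(A)` means that `ζ f * a` becomes small as `f` runs through bump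
functions at `x` with shrinking supports. An injective `φ` is isometric and carries `ζA f * a` to
`ζB f * φ a`, so it reflects this condition.

Conversely, an element `a` of the kernel of `φ` lies in every `J_x(A)` as soon as `φ` is injective
on fibers, so it suffices that `⋂ x, J_x(A) = 0`. The elements `ζ f` and `star a * a` generate a
commutative C⋆-algebra. Each of its characters restricts along `ζ` to the evaluation at some
point `x`, so it takes the same value at `star a * a` and at `ζ f * (star a * a)` for every bump
function `f` at `x`. As the latter elements tend to `0`, every character vanishes at `star a * a`.
-/

open Filter Topology WeakDual

theorem tendsto_mul_zero_of_mem_closure_span {𝕜 R ι : Type*} [NormedField 𝕜] [SeminormedRing R]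
    [NormedAlgebra 𝕜 R] {l : Filter ι} {u : ι → R} (hu : l.IsBoundedUnder (· ≤ ·) fun i ↦ ‖u i‖)
    {s : Set R} (hs : ∀ b ∈ s, Tendsto (fun i ↦ u i * b) l (𝓝 0)) {a : R}
    (ha : a ∈ closure (Submodule.span 𝕜 s : Set R)) :
    Tendsto (fun i ↦ u i * a) l (𝓝 0) := by
  have tendsto_of_mem_span : ∀ b ∈ Submodule.span 𝕜 s, Tendsto (fun i ↦ u i * b) l (𝓝 0) := by
    intro b hb
    induction hb using Submodule.span_induction with
    | mem b hb => exact hs b hb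
    | zero => simpa using tendsto_const_nhds
    | add b c _ _ hb hc => simpa [mul_add] using hb.add hc
    | smul r b _ hb => simpa [mul_smul_comm] using hb.const_smul r
  obtain ⟨C, hC, hu⟩ : ∃ C > 0, ∀ᶠ i in l, ‖u i‖ ≤ C := by
    obtain ⟨K, hK⟩ := hu
    exact ⟨max K 1, by positivity, (eventually_map.mp hK).mono fun _ ↦ le_max_of_le_left⟩
  rw [Metric.tendsto_nhds]
  intro ε hε
  obtain ⟨b, hb, hab⟩ := Metric.mem_closure_iff.mp ha (ε / 2 / C) (by positivity)
  filter_upwards [hu, Metric.tendsto_nhds.mp (tendsto_of_mem_span b hb) (ε / 2) (half_pos hε)]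
    with i hui hib
  rw [dist_zero_right] at hib ⊢
  rw [dist_eq_norm] at hab
  calc ‖u i * a‖ = ‖u i * (a - b) + u i * b‖ := by rw [← mul_add, sub_add_cancel]
    _ ≤ ‖u i‖ * ‖a - b‖ + ‖u i * b‖ := norm_add_le_of_le (norm_mul_le _ _) le_rfl
    _ ≤ C * (ε / 2 / C) + ‖u i * b‖ := by gcongr
    _ = ε / 2 + ‖u i * b‖ := by rw [mul_div_cancel₀ _ hC.ne']
    _ < ε := by linarith

section BumpFunctions

variable {X : Type*} [TopologicalSpace X] [CompactSpace X]

/-- The bump functions at `x` subordinate to `U`: the elements of the unit ball of `C(X, ℂ)` that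
take the value `1` at `x` and vanish off `U`. -/
def bumpFunctions (x : X) (U : Set X) : Set C(X, ℂ) :=
  {f | f x = 1 ∧ ‖f‖ ≤ 1 ∧ ∀ y ∉ U, f y = 0}

theorem bumpFunctions_mono (x : X) : Monotone (bumpFunctions x) :=
  fun _ _ hUV _ hf ↦ ⟨hf.1, hf.2.1, fun y hy ↦ hf.2.2 y fun hyU ↦ hy (hUV hyU)⟩

theorem bumpFunctions_nonempty [T2Space X] {x : X} {U : Set X} (hU : U ∈ 𝓝 x) :
    (bumpFunctions x U).Nonempty := by
  have disjoint_compl : Disjoint (interior U)ᶜ {x} := by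
    simpa using mem_interior_iff_mem_nhds.mpr hU
  obtain ⟨g, hg_zero, hg_one, hg_mem⟩ :=
    exists_continuous_zero_one_of_isClosed isOpen_interior.isClosed_compl isClosed_singleton
      disjoint_compl
  refine ⟨⟨fun y ↦ g y, by fun_prop⟩, ?_, ?_, fun y hy ↦ ?_⟩
  · simpa using hg_one (Set.mem_singleton x)
  · refine (ContinuousMap.norm_le _ zero_le_one).mpr fun y ↦ ?_
    simpa [abs_of_nonneg (hg_mem y).1] using (hg_mem y).2
  · simpa using hg_zero fun hyU ↦ hy (interior_subset hyU)

/-- The filter on `C(X, ℂ)` of bump functions at `x` with supports shrinking to `x`. As `f` runs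
along it, `1 - f` is an approximate unit of the ideal of functions vanishing at `x`. -/
def bumpFilter (x : X) : Filter C(X, ℂ) :=
  (𝓝 x).lift' (bumpFunctions x)

theorem bumpFunctions_mem_bumpFilter {x : X} {U : Set X} (hU : U ∈ 𝓝 x) :
    bumpFunctions x U ∈ bumpFilter x :=
  mem_lift' hU

instance bumpFilter_neBot [T2Space X] (x : X) : (bumpFilter x).NeBot :=
  (lift'_neBot_iff (bumpFunctions_mono x)).mpr fun _ ↦ bumpFunctions_nonempty

theorem eventually_bumpFilter_apply_eq_one (x : X) : ∀ᶠ f in bumpFilter x, f x = 1 :=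
  mem_of_superset (bumpFunctions_mem_bumpFilter univ_mem) fun _ hf ↦ hf.1

theorem eventually_bumpFilter_norm_le_one (x : X) : ∀ᶠ f in bumpFilter x, ‖f‖ ≤ 1 :=
  mem_of_superset (bumpFunctions_mem_bumpFilter univ_mem) fun _ hf ↦ hf.2.1

theorem tendsto_mul_bumpFilter_zero {x : X} {g : C(X, ℂ)} (hg : g x = 0) :
    Tendsto (fun f ↦ f * g) (bumpFilter x) (𝓝 0) := by
  rw [Metric.nhds_basis_closedBall.tendsto_right_iff]
  intro ε hε
  have small_near : {y | ‖g y‖ ≤ ε} ∈ 𝓝 x :=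
    g.continuous.norm.continuousAt.eventually_le_const (by simpa [hg] using hε)
  filter_upwards [bumpFunctions_mem_bumpFilter small_near] with f ⟨_, hf_norm, hf_zero⟩
  rw [mem_closedBall_zero_iff, ContinuousMap.norm_le _ hε.le]
  intro y
  by_cases hy : ‖g y‖ ≤ ε
  · calc ‖f y * g y‖ = ‖f y‖ * ‖g y‖ := norm_mul _ _
      _ ≤ 1 * ε := by gcongr; exact (f.norm_coe_le_norm y).trans hf_norm
      _ = ε := one_mul ε
  · simpa [hf_zero y hy] using hε.le

end BumpFunctions

section FiberIdeal

variable {X A : Type*} [TopologicalSpace X] [CompactSpace X] [T2Space X]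

open scoped CStarAlgebra in
theorem mem_fiberIdeal_iff_tendsto [CStarAlgebra A] {ζ : C(X, ℂ) →⋆ₐ[ℂ] A} {x : X} {a : A} :
    a ∈ fiberIdeal ζ x ↔ Tendsto (fun f ↦ ζ f * a) (bumpFilter x) (𝓝 0) := by
  constructor
  · refine tendsto_mul_zero_of_mem_closure_span (isBoundedUnder_of_eventually_le (a := 1) ?_) ?_
    · filter_upwards [eventually_bumpFilter_norm_le_one x] with f hf
      exact (NonUnitalStarAlgHom.norm_apply_le ζ f).trans hf
    · rintro _ ⟨g, b, hg, rfl⟩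
      have tendsto_map : Tendsto (fun f ↦ ζ (f * g)) (bumpFilter x) (𝓝 0) :=
        ((map_continuous ζ).tendsto' 0 0 (map_zero ζ)).comp (tendsto_mul_bumpFilter_zero hg)
      simpa [mul_assoc] using tendsto_map.mul_const b
  · intro ha
    have tendsto_self : Tendsto (fun f ↦ ζ (1 - f) * a) (bumpFilter x) (𝓝 a) := by
      simpa [sub_mul] using ha.const_sub a
    refine mem_closure_of_tendsto tendsto_self ?_
    filter_upwards [eventually_bumpFilter_apply_eq_one x] with f hf
    exact Submodule.subset_span ⟨1 - f, a, by simp [hf], rfl⟩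

theorem exists_characterSpace_comp_eq_eval [NormedRing A] [NormedAlgebra ℂ A] [CompleteSpace A]
    [StarRing A] (ζ : C(X, ℂ) →⋆ₐ[ℂ] A) (χ : characterSpace ℂ A) : ∃ x : X, ∀ f, χ (ζ f) = f x := by
  obtain ⟨x, hx⟩ := (CharacterSpace.continuousMapEval_bijective X ℂ).surjective
    (CharacterSpace.compContinuousMap ζ χ)
  exact ⟨x, fun f ↦ (DFunLike.congr_fun hx f).symm⟩

theorem eq_zero_of_forall_tendsto_bumpFilter [CommCStarAlgebra A] {ζ : C(X, ℂ) →⋆ₐ[ℂ] A} {a : A}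
    (ha : ∀ x, Tendsto (fun f ↦ ζ f * a) (bumpFilter x) (𝓝 0)) : a = 0 := by
  refine (injective_iff_map_eq_zero _).mp (gelfandTransform_isometry A).injective a ?_
  ext χ
  obtain ⟨x, hx⟩ := exists_characterSpace_comp_eq_eval ζ χ
  have tendsto_zero : Tendsto (fun f ↦ χ (ζ f * a)) (bumpFilter x) (𝓝 0) :=
    ((map_continuous χ).tendsto' 0 0 (map_zero χ)).comp (ha x)
  have eventually_const : (fun f ↦ χ (ζ f * a)) =ᶠ[bumpFilter x] fun _ ↦ χ a := by
    filter_upwards [eventually_bumpFilter_apply_eq_one x] with f hf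
    rw [map_mul, hx, hf, one_mul]
  exact tendsto_nhds_unique (tendsto_const_nhds.congr' eventually_const.symm) tendsto_zero

open scoped IsMulCommutative in
theorem eq_zero_of_isStarNormal_of_forall_mem_fiberIdeal [CStarAlgebra A] {ζ : C(X, ℂ) →⋆ₐ[ℂ] A}
    (hζ : ∀ f a, ζ f * a = a * ζ f) {a : A} (hn : IsStarNormal a) (ha : ∀ x, a ∈ fiberIdeal ζ x) :
    a = 0 := by
  let s : Set A := insert a (Set.range ζ)
  let S : StarSubalgebra ℂ A := (StarAlgebra.adjoin ℂ s).topologicalClosure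
  have subset_S : s ⊆ S :=
    (StarAlgebra.subset_adjoin ℂ s).trans (StarSubalgebra.le_topologicalClosure _)
  have commutative_adjoin : IsMulCommutative (StarAlgebra.adjoin ℂ s) := by
    refine StarAlgebra.isMulCommutative_adjoin ℂ ?_ ?_
    · rintro _ (rfl | ⟨f, rfl⟩) _ (rfl | ⟨g, rfl⟩)
      exacts [rfl, (hζ g _).symm, hζ f _, hζ f _]
    · rintro _ (rfl | ⟨f, rfl⟩) _ (rfl | ⟨g, rfl⟩)
      exacts [hn.star_comm_self.symm.eq, map_star ζ g ▸ (hζ (star g) _).symm, hζ f _, hζ f _]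
  have : IsClosed (S : Set A) := StarSubalgebra.isClosed_topologicalClosure _
  let : CommRing S := StarSubalgebra.commRingTopologicalClosure _ mul_comm
  let : CommCStarAlgebra S := { }
  let ζS : C(X, ℂ) →⋆ₐ[ℂ] S :=
    ζ.codRestrict S fun f ↦ subset_S (Set.mem_insert_of_mem _ ⟨f, rfl⟩)
  let aS : S := ⟨a, subset_S (Set.mem_insert _ _)⟩
  have tendsto_aS (x : X) : Tendsto (fun f ↦ ζS f * aS) (bumpFilter x) (𝓝 0) :=
    tendsto_subtype_rng.mpr (mem_fiberIdeal_iff_tendsto.mp (ha x))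
  exact congrArg Subtype.val (eq_zero_of_forall_tendsto_bumpFilter tendsto_aS)

theorem eq_zero_of_forall_mem_fiberIdeal [CStarAlgebra A] {ζ : C(X, ℂ) →⋆ₐ[ℂ] A}
    (hζ : ∀ f a, ζ f * a = a * ζ f) {a : A} (ha : ∀ x, a ∈ fiberIdeal ζ x) : a = 0 := by
  rw [← CStarRing.star_mul_self_eq_zero_iff]
  have star_mul_self_mem (x : X) : star a * a ∈ fiberIdeal ζ x := by
    rw [mem_fiberIdeal_iff_tendsto]
    simpa only [← mul_assoc, hζ, mul_zero] using
      (mem_fiberIdeal_iff_tendsto.mp (ha x)).const_mul (star a)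
  exact eq_zero_of_isStarNormal_of_forall_mem_fiberIdeal hζ
    (IsSelfAdjoint.star_mul_self a).isStarNormal star_mul_self_mem

theorem map_mem_fiberIdeal_iff_of_injective {B : Type*} [CStarAlgebra A] [CStarAlgebra B]
    {ζA : C(X, ℂ) →⋆ₐ[ℂ] A} {ζB : C(X, ℂ) →⋆ₐ[ℂ] B} {φ : A →⋆ₐ[ℂ] B}
    (hφ : ∀ f, φ (ζA f) = ζB f) (hinj : Function.Injective φ) {x : X} {a : A} :
    φ a ∈ fiberIdeal ζB x ↔ a ∈ fiberIdeal ζA x := by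
  simp only [mem_fiberIdeal_iff_tendsto, ← hφ, ← map_mul]
  rw [tendsto_zero_iff_norm_tendsto_zero]
  simp only [NonUnitalStarAlgHom.norm_map φ hinj]
  rw [← tendsto_zero_iff_norm_tendsto_zero]

end FiberIdeal

theorem stmt8_general {X A B : Type*} [TopologicalSpace X] [CompactSpace X] [T2Space X]
    [NormedRing A] [StarRing A] [CStarRing A] [NormedAlgebra ℂ A]
    [CompleteSpace A] [StarModule ℂ A]
    [NormedRing B] [StarRing B] [CStarRing B] [NormedAlgebra ℂ B]
    [CompleteSpace B] [StarModule ℂ B]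
    (ζA : C(X, ℂ) →⋆ₐ[ℂ] A) (ζB : C(X, ℂ) →⋆ₐ[ℂ] B)
    (hζA : ∀ (f : C(X, ℂ)) (a : A), ζA f * a = a * ζA f)
    (φ : A →⋆ₐ[ℂ] B) (hφ : ∀ f : C(X, ℂ), φ (ζA f) = ζB f) :
    Function.Injective φ ↔
      ∀ (x : X) (a : A), φ a ∈ fiberIdeal ζB x → a ∈ fiberIdeal ζA x := by
  let : CStarAlgebra A := { }
  let : CStarAlgebra B := { }
  refine ⟨fun hinj x a ↦ (map_mem_fiberIdeal_iff_of_injective hφ hinj).mp, fun h ↦ ?_⟩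
  rw [injective_iff_map_eq_zero]
  intro a ha
  refine eq_zero_of_forall_mem_fiberIdeal hζA fun x ↦ h x a ?_
  rw [ha]
  exact subset_closure (Submodule.zero_mem _)

/-- Let `X` be a compact Hausdorff space, `A`, `B` unital C*-algebras,
`ζ_A : C(X) → A`, `ζ_B : C(X) → B` unital *-homomorphisms with central ranges, and
`φ : A → B` a unital *-homomorphism with `φ ∘ ζ_A = ζ_B`.  Then `φ` is injective iff all
the induced fiber maps `A/J_x(A) → B/J_x(B)` are injective, i.e. iff for every `x` and
`a`, `φ a ∈ J_x(B)` implies `a ∈ J_x(A)`. -/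
theorem stmt8 {X A B : Type*} [TopologicalSpace X] [CompactSpace X] [T2Space X]
    [NormedRing A] [StarRing A] [CStarRing A] [NormedAlgebra ℂ A]
    [CompleteSpace A] [StarModule ℂ A]
    [NormedRing B] [StarRing B] [CStarRing B] [NormedAlgebra ℂ B]
    [CompleteSpace B] [StarModule ℂ B]
    (ζA : C(X, ℂ) →⋆ₐ[ℂ] A) (ζB : C(X, ℂ) →⋆ₐ[ℂ] B)
    (hζA : ∀ (f : C(X, ℂ)) (a : A), ζA f * a = a * ζA f)
    (hζB : ∀ (f : C(X, ℂ)) (b : B), ζB f * b = b * ζB f)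
    (φ : A →⋆ₐ[ℂ] B) (hφ : ∀ f : C(X, ℂ), φ (ζA f) = ζB f) :
    Function.Injective φ ↔
      ∀ (x : X) (a : A), φ a ∈ fiberIdeal ζB x → a ∈ fiberIdeal ζA x := by
  exact stmt8_general ζA ζB hζA φ hφ
end

section
/- Let X be a compact Hausdorff space, let A and B be unital C*-algebras, let ζ_A : C(X,ℂ) → A and ζ_B : C(X,ℂ) → B be unital *-homomorphisms whose ranges lie in the centers of A and B respectively, and let φ : A → B be a unital *-homomorphism with φ ∘ ζ_A = ζ_B. Then φ is surjective if and only if for every x ∈ X and every b ∈ B there exists a ∈ A with b − φ(a) ∈ J_x(B); that is, φ is surjective precisely when every induced fiber map A/J_x(A) → B/J_x(B) is surjective. -/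
/-!
Elements of `J_x(B)` are, up to a small error, annihilated by functions supported near `x`. So if
`b` is fiberwise in the range of `φ`, then near each point `x` it agrees with some `φ a_x` up to
an error `r_x` of norm at most `δ`. Patching with a finite partition of unity `∑ q_i q_i^* = 1`
and using centrality, the total error is `∑ q_i r_i q_i^*`, whose norm is at most `δ` by the
Cauchy–Schwarz inequality for Hilbert C*-modules, however many terms there are. Hence `b` lies in
the closure of the range of `φ`, and the range of a *-homomorphism is closed because preimages can
be chosen with norm at most `2 ‖φ a‖`.
-/

open Filter Topology
open scoped ComplexStarModule CStarAlgebra WithCStarModule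

section ClosedRange

variable {A B : Type*} [NonUnitalCStarAlgebra A] [NonUnitalCStarAlgebra B] (φ : A →⋆ₙₐ[ℂ] B)

-- Truncating the preimage to `[-‖φ h‖, ‖φ h‖]` by functional calculus does not change its image.
theorem exists_apply_eq_norm_le_of_isSelfAdjoint {h : A} (hh : IsSelfAdjoint h) :
    ∃ a : A, φ a = φ h ∧ ‖a‖ ≤ ‖φ h‖ := by
  set c : ℝ := ‖φ h‖
  have hc : 0 ≤ c := norm_nonneg _
  have hφh : IsSelfAdjoint (φ h) := hh.map φ
  let truncate : ℝ → ℝ := fun t ↦ max (-c) (min t c)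
  have truncate_zero : truncate 0 = 0 := by simp [truncate, hc]
  have truncate_eqOn : (quasispectrum ℝ (φ h)).EqOn truncate id := fun t ht ↦ by
    have ht' : |t| ≤ c :=
      NonUnitalIsometricContinuousFunctionalCalculus.norm_quasispectrum_le (φ h) ht hφh
    simp [truncate, abs_le.1 ht']
  have abs_truncate_le (t : ℝ) : |truncate t| ≤ c :=
    abs_le.2 ⟨le_max_left _ _, max_le (by linarith) (min_le_right _ _)⟩
  refine ⟨cfcₙ truncate h, ?_, norm_cfcₙ_le fun t _ ↦ abs_truncate_le t⟩
  calc φ (cfcₙ truncate h) = cfcₙ truncate (φ h) :=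
        φ.map_cfcₙ truncate h (by fun_prop) truncate_zero (map_continuous φ) hh hφh
    _ = cfcₙ id (φ h) := cfcₙ_congr truncate_eqOn
    _ = φ h := cfcₙ_id ℝ (φ h) hφh

theorem exists_apply_eq_norm_le_two_mul (a : A) : ∃ a' : A, φ a' = φ a ∧ ‖a'‖ ≤ 2 * ‖φ a‖ := by
  obtain ⟨u, hu, hu_norm⟩ := exists_apply_eq_norm_le_of_isSelfAdjoint φ (ℜ a).2
  obtain ⟨v, hv, hv_norm⟩ := exists_apply_eq_norm_le_of_isSelfAdjoint φ (ℑ a).2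
  rw [map_realPart] at hu hu_norm
  rw [map_imaginaryPart] at hv hv_norm
  refine ⟨u + Complex.I • v, ?_, ?_⟩
  · rw [map_add, map_smul, hu, hv, realPart_add_I_smul_imaginaryPart]
  · calc ‖u + Complex.I • v‖ ≤ ‖u‖ + ‖v‖ := by
          simpa [norm_smul] using norm_add_le u (Complex.I • v)
      _ ≤ ‖φ a‖ + ‖φ a‖ :=
          add_le_add (hu_norm.trans (realPart.norm_le (φ a)))
            (hv_norm.trans (imaginaryPart.norm_le (φ a)))
      _ = 2 * ‖φ a‖ := (two_mul _).symm

theorem isClosed_range_of_nonUnitalStarAlgHom : IsClosed (Set.range φ) := by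
  let f : NormedAddGroupHom A B := (φ : A →+ B).mkNormedAddGroupHom 1 fun a ↦ by
    simpa using NonUnitalStarAlgHom.norm_apply_le φ a
  have bounded_lift : f.SurjectiveOnWith f.range 2 := by
    rintro _ ⟨a, rfl⟩
    exact exists_apply_eq_norm_le_two_mul φ a
  refine isClosed_of_closure_subset fun b hb ↦ ?_
  obtain ⟨a, ha, -⟩ := controlled_closure_of_complete two_pos one_pos bounded_lift b hb
  exact ⟨a, ha⟩

end ClosedRange

section Conjugation

variable {B ι : Type*} [NonUnitalCStarAlgebra B] [Fintype ι]

theorem norm_sum_mul_star_sq_le (x y : ι → B) :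
    ‖∑ i, y i * star (x i)‖ ^ 2 ≤ ‖∑ i, x i * star (x i)‖ * ‖∑ i, y i * star (y i)‖ := by
  let _ := CStarAlgebra.spectralOrder B
  have := CStarAlgebra.spectralOrderedRing B
  let toModule := (WithCStarModule.equiv B (ι → B)).symm
  have cauchy_schwarz := CStarModule.norm_inner_le (A := B) C⋆ᵐᵒᵈ(B, ι → B)
    (x := toModule x) (y := toModule y)
  have := pow_le_pow_left₀ (norm_nonneg _) cauchy_schwarz 2
  rwa [mul_pow, WithCStarModule.pi_norm_sq, WithCStarModule.pi_norm_sq] at this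

theorem norm_sum_mul_mul_star_le (q r : ι → B) :
    ‖∑ i, q i * r i * star (q i)‖ ≤ ‖r‖ * ‖∑ i, q i * star (q i)‖ := by
  let _ := CStarAlgebra.spectralOrder B
  have := CStarAlgebra.spectralOrderedRing B
  have conj_le (i : ι) :
      q i * r i * star (q i * r i) ≤ ‖r‖ ^ 2 • (q i * star (q i)) := by
    calc q i * r i * star (q i * r i) = q i * (r i * star (r i)) * star (q i) := by
          simp only [star_mul, mul_assoc]
      _ ≤ ‖r i * star (r i)‖ • (q i * star (q i)) :=
          CStarAlgebra.star_right_conjugate_le_norm_smul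
      _ ≤ ‖r‖ ^ 2 • (q i * star (q i)) := by
          rw [CStarRing.norm_self_mul_star, ← sq]
          gcongr
          · exact mul_star_self_nonneg _
          · exact norm_le_pi_norm r i
  have norm_sum_le :
      ‖∑ i, q i * r i * star (q i * r i)‖ ≤ ‖r‖ ^ 2 * ‖∑ i, q i * star (q i)‖ := by
    calc ‖∑ i, q i * r i * star (q i * r i)‖ ≤ ‖‖r‖ ^ 2 • ∑ i, q i * star (q i)‖ := by
          rw [Finset.smul_sum]
          exact CStarAlgebra.norm_le_norm_of_nonneg_of_le
            (Finset.sum_nonneg fun i _ ↦ mul_star_self_nonneg _)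
            (Finset.sum_le_sum fun i _ ↦ conj_le i)
      _ = ‖r‖ ^ 2 * ‖∑ i, q i * star (q i)‖ := by simp [norm_smul]
  refine le_of_sq_le_sq ?_ (by positivity)
  calc ‖∑ i, q i * r i * star (q i)‖ ^ 2
      ≤ ‖∑ i, q i * star (q i)‖ * ‖∑ i, q i * r i * star (q i * r i)‖ :=
        norm_sum_mul_star_sq_le q fun i ↦ q i * r i
    _ ≤ ‖∑ i, q i * star (q i)‖ * (‖r‖ ^ 2 * ‖∑ i, q i * star (q i)‖) := by gcongr
    _ = (‖r‖ * ‖∑ i, q i * star (q i)‖) ^ 2 := by ring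

end Conjugation

section ContinuousFunctions

variable {X : Type*} [TopologicalSpace X] [CompactSpace X]

theorem mem_closure_eventuallyEq_zero_of_apply_eq_zero {E : Type*} [NormedAddCommGroup E]
    [NormedSpace ℝ E] {f : C(X, E)} {x : X} (hfx : f x = 0) :
    f ∈ closure {g : C(X, E) | g =ᶠ[𝓝 x] 0} := by
  refine Metric.mem_closure_iff.2 fun ε hε ↦ ?_
  obtain ⟨δ, hδ, hδε⟩ := exists_between hε
  have max_pos (y : X) : 0 < max δ ‖f y‖ := lt_max_of_lt_left hδ
  -- `f - w` is the soft thresholding of `f` at level `δ`.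
  let w : C(X, E) := ⟨fun y ↦ (δ / max δ ‖f y‖) • f y, by
    fun_prop (disch := exact fun y ↦ (max_pos y).ne')⟩
  have norm_w_le : ‖w‖ ≤ δ := (w.norm_le hδ.le).2 fun y ↦ by
    calc ‖(δ / max δ ‖f y‖) • f y‖ = δ * ‖f y‖ / max δ ‖f y‖ := by
          rw [norm_smul, Real.norm_of_nonneg (div_nonneg hδ.le (max_pos y).le), div_mul_eq_mul_div]
      _ ≤ δ := (div_le_iff₀ (max_pos y)).2 (by gcongr; exact le_max_right _ _)
  have f_small : ∀ᶠ y in 𝓝 x, ‖f y‖ < δ :=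
    (by fun_prop : Continuous fun y ↦ ‖f y‖).continuousAt.eventually_lt_const (by simpa [hfx])
  refine ⟨f - w, ?_, by simpa using norm_w_le.trans_lt hδε⟩
  filter_upwards [f_small] with y hy
  simp [w, max_eq_left hy.le, hδ.ne']

theorem exists_sum_mul_star_eq_one_of_nhds [T2Space X] {U : X → Set X} (hU : ∀ x, U x ∈ 𝓝 x) :
    ∃ (t : Finset X) (q : t → C(X, ℂ)),
      (∀ i, Function.support (q i) ⊆ U i) ∧ ∑ i, q i * star (q i) = 1 := by
  obtain ⟨t, ht⟩ := CompactSpace.elim_nhds_subcover (fun x ↦ interior (U x))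
    fun x ↦ interior_mem_nhds.2 (hU x)
  obtain ⟨p, hp⟩ := PartitionOfUnity.exists_isSubordinate isClosed_univ
    (fun i : t ↦ interior (U i)) (fun _ ↦ isOpen_interior) (by
      simpa only [Set.iUnion_subtype] using! ht.ge)
  let q (i : t) : C(X, ℂ) := ⟨fun x ↦ (√(p i x) : ℝ), by fun_prop⟩
  have q_mul_star (i : t) (x : X) : q i x * star (q i x) = p i x := by
    simp [q, ← Complex.ofReal_mul, Real.mul_self_sqrt (p.nonneg i x)]
  refine ⟨t, q, fun i x hx ↦ interior_subset (hp i (subset_tsupport _ fun h ↦ hx ?_)), ?_⟩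
  · simp [q, h]
  · ext x
    have sum_p : ∑ i, p i x = 1 := by
      rw [← finsum_eq_sum_of_fintype, p.sum_eq_one (Set.mem_univ x)]
    simpa only [ContinuousMap.sum_apply, ContinuousMap.mul_apply, ContinuousMap.star_apply,
      q_mul_star, Complex.ofReal_sum, Complex.ofReal_one,
      ContinuousMap.one_apply] using congrArg ((↑) : ℝ → ℂ) sum_p

end ContinuousFunctions

section Localization

variable {X B : Type*} [TopologicalSpace X] [Ring B] [StarRing B] [Algebra ℂ B]
  (ζ : C(X, ℂ) →⋆ₐ[ℂ] B)

/-- The elements of the `C(X)`-algebra `(B, ζ)` that vanish near `x`: those annihilated by `ζ g`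
for every `g` supported in a sufficiently small neighbourhood of `x`. The closure of this subspace
contains `fiberIdeal ζ x`. -/
def vanishingNear (x : X) : Submodule ℂ B where
  carrier := {d | ∀ᶠ U in (𝓝 x).smallSets, ∀ g : C(X, ℂ), Function.support g ⊆ U → ζ g * d = 0}
  zero_mem' := .of_forall fun _ _ _ ↦ mul_zero _
  add_mem' hd he := by
    filter_upwards [hd, he] with U hdU heU g hg
    rw [mul_add, hdU g hg, heU g hg, add_zero]
  smul_mem' c d hd := by
    filter_upwards [hd] with U hdU g hg
    rw [mul_smul_comm, hdU g hg, smul_zero]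

theorem map_mul_mem_vanishingNear {f : C(X, ℂ)} {x : X} (hf : f =ᶠ[𝓝 x] 0) (b : B) :
    ζ f * b ∈ vanishingNear ζ x := by
  filter_upwards [hf.smallSets] with U hU g hg
  have mul_eq_zero : g * f = 0 := by
    ext y
    by_cases hy : g y = 0
    · simp [hy]
    · simp [hU y (hg hy)]
  rw [← mul_assoc, ← map_mul, mul_eq_zero, map_zero, zero_mul]

end Localization

section Fibers

variable {X B : Type*} [TopologicalSpace X] [CompactSpace X] [T2Space X] [CStarAlgebra B]
  (ζ : C(X, ℂ) →⋆ₐ[ℂ] B)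

theorem fiberIdeal_subset_closure_vanishingNear (x : X) :
    fiberIdeal ζ x ⊆ closure (vanishingNear ζ x) := by
  refine closure_minimal ?_ isClosed_closure
  rw [← Submodule.topologicalClosure_coe, SetLike.coe_subset_coe, Submodule.span_le]
  rintro _ ⟨f, b, hfx, rfl⟩
  exact map_mem_closure (f := fun f ↦ ζ f * b) ((map_continuous ζ).mul continuous_const)
    (mem_closure_eventuallyEq_zero_of_apply_eq_zero hfx)
    fun _ hg ↦ map_mul_mem_vanishingNear ζ hg b

theorem exists_norm_lt_map_mul_eq_of_mem_fiberIdeal {x : X} {d : B} (hd : d ∈ fiberIdeal ζ x)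
    {δ : ℝ} (hδ : 0 < δ) :
    ∃ r : B, ‖r‖ < δ ∧
      ∃ U ∈ 𝓝 x, ∀ g : C(X, ℂ), Function.support g ⊆ U → ζ g * d = ζ g * r := by
  obtain ⟨e, he, hde⟩ :=
    Metric.mem_closure_iff.1 (fiberIdeal_subset_closure_vanishingNear ζ x hd) δ hδ
  obtain ⟨U, hU, hUe⟩ := eventually_smallSets.1 he
  refine ⟨d - e, by rwa [← dist_eq_norm], U, hU, fun g hg ↦ ?_⟩
  rw [mul_sub, hUe U subset_rfl g hg, sub_zero]

theorem mem_closure_of_forall_sub_mem_fiberIdeal (hζ : ∀ f b, ζ f * b = b * ζ f)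
    (V : Submodule ℂ B) (hV : ∀ f, ∀ v ∈ V, ζ f * v ∈ V) {b : B}
    (hb : ∀ x, ∃ v ∈ V, b - v ∈ fiberIdeal ζ x) : b ∈ closure (V : Set B) := by
  refine Metric.mem_closure_iff.2 fun ε hε ↦ ?_
  obtain ⟨δ, hδ, hδε⟩ := exists_between hε
  choose v hvV hv using hb
  choose r hr U hU hUr using fun x ↦ exists_norm_lt_map_mul_eq_of_mem_fiberIdeal ζ (hv x) hδ
  obtain ⟨t, q, hqU, hq⟩ := exists_sum_mul_star_eq_one_of_nhds hU
  have norm_r_le : ‖fun i : t ↦ r i‖ ≤ δ := (pi_norm_le_iff_of_nonneg hδ.le).2 fun i ↦ (hr i).le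
  have sum_map_q : ∑ i, ζ (q i) * star (ζ (q i)) = 1 := by
    simpa only [map_sum, map_mul, map_star, map_one] using congrArg ζ hq
  have local_error (i : t) :
      ζ (q i) * star (ζ (q i)) * (b - v i) = ζ (q i) * r i * star (ζ (q i)) := by
    rw [← map_star, hζ (q i), mul_assoc, hUr i (q i) (hqU i), hζ (star (q i))]
  let w : B := ∑ i, ζ (q i) * star (ζ (q i)) * v i
  have hw : w ∈ V := V.sum_mem fun i _ ↦ by
    simpa only [map_mul, map_star] using hV (q i * star (q i)) _ (hvV i)
  have error_eq : b - w = ∑ i, ζ (q i) * r i * star (ζ (q i)) := by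
    simp only [← local_error, mul_sub, Finset.sum_sub_distrib, ← Finset.sum_mul, sum_map_q, one_mul,
      w]
  refine ⟨w, hw, ?_⟩
  calc dist b w = ‖∑ i, ζ (q i) * r i * star (ζ (q i))‖ := by rw [dist_eq_norm, error_eq]
    _ ≤ ‖fun i : t ↦ r i‖ * ‖∑ i, ζ (q i) * star (ζ (q i))‖ := norm_sum_mul_mul_star_le _ _
    _ ≤ δ * 1 := by
        rw [sum_map_q]
        gcongr
        exact (IsStarProjection.one B).norm_le
    _ < ε := by rwa [mul_one]

theorem stmt9_general {A : Type*} [NonUnitalCStarAlgebra A] (hζ : ∀ f b, ζ f * b = b * ζ f)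
    (φ : A →⋆ₙₐ[ℂ] B) (hφ : Set.range ζ ⊆ Set.range φ) :
    Function.Surjective φ ↔ ∀ (x : X) (b : B), ∃ a : A, b - φ a ∈ fiberIdeal ζ x := by
  refine ⟨fun hsurj x b ↦ ?_, fun hfiber b ↦ ?_⟩
  · obtain ⟨a, rfl⟩ := hsurj b
    exact ⟨a, subset_closure (by simp)⟩
  · let V : Submodule ℂ B := LinearMap.range (φ : A →ₗ[ℂ] B)
    have hV : ∀ f, ∀ v ∈ V, ζ f * v ∈ V := by
      rintro f _ ⟨a, rfl⟩
      obtain ⟨c, hc⟩ := hφ ⟨f, rfl⟩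
      exact ⟨c * a, by simp [hc]⟩
    have hb : b ∈ closure (V : Set B) := mem_closure_of_forall_sub_mem_fiberIdeal ζ hζ V hV
      fun x ↦ (hfiber x b).elim fun a ha ↦ ⟨φ a, ⟨a, rfl⟩, ha⟩
    exact (isClosed_range_of_nonUnitalStarAlgHom φ).closure_eq.subset hb

end Fibers

/-- Let `X` be a compact Hausdorff space, `A`, `B` unital C*-algebras,
`ζ_A : C(X) → A`, `ζ_B : C(X) → B` unital *-homomorphisms with central ranges, and
`φ : A → B` a unital *-homomorphism with `φ ∘ ζ_A = ζ_B`.  Then `φ` is surjective iff all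
the induced fiber maps `A/J_x(A) → B/J_x(B)` are surjective, i.e. iff for every `x` and
`b` there is `a` with `b − φ a ∈ J_x(B)`. -/
theorem stmt9 {X A B : Type*} [TopologicalSpace X] [CompactSpace X] [T2Space X]
    [NormedRing A] [StarRing A] [CStarRing A] [NormedAlgebra ℂ A]
    [CompleteSpace A] [StarModule ℂ A]
    [NormedRing B] [StarRing B] [CStarRing B] [NormedAlgebra ℂ B]
    [CompleteSpace B] [StarModule ℂ B]
    (ζA : C(X, ℂ) →⋆ₐ[ℂ] A) (ζB : C(X, ℂ) →⋆ₐ[ℂ] B)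
    (hζA : ∀ (f : C(X, ℂ)) (a : A), ζA f * a = a * ζA f)
    (hζB : ∀ (f : C(X, ℂ)) (b : B), ζB f * b = b * ζB f)
    (φ : A →⋆ₐ[ℂ] B) (hφ : ∀ f : C(X, ℂ), φ (ζA f) = ζB f) :
    Function.Surjective φ ↔
      ∀ (x : X) (b : B), ∃ a : A, b - φ a ∈ fiberIdeal ζB x := by
  let _ : CStarAlgebra A := {}
  let _ : CStarAlgebra B := {}
  exact stmt9_general ζB hζB (φ : A →⋆ₙₐ[ℂ] B) (Set.range_subset_iff.2 fun f ↦ ⟨ζA f, hφ f⟩)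
end

section
/- Under the relations (R1)–(R4) one has s² = 0. -/
/-!
The diagonal elements are mutually orthogonal and one of them fixes `s` from the left, so their sum
`e` satisfies `e * s = s`. Multiplying `e + star s * s = 1` on the right by `s` gives
`star s * s * s = 0`, and then `s * s = 0` because `star a * a = 0` forces `a = 0`.
-/

theorem sum_mul_eq_of_mul_eq_zero {R ι : Type*} [NonUnitalSemiring R] [Fintype ι] {p : ι → R}
    {i : ι} {s : R} (hp : ∀ j, j ≠ i → p j * p i = 0) (hs : p i * s = s) :
    (∑ j, p j) * s = s := by
  have h_off_diag (j : ι) (hj : j ≠ i) : p j * s = 0 := by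
    rw [← hs, ← mul_assoc, hp j hj, zero_mul]
  rw [Finset.sum_mul, Fintype.sum_eq_single i h_off_diag, hs]

theorem mul_eq_zero_of_mul_eq_self_of_add_eq_one {R : Type*} [NonAssocSemiring R]
    [IsLeftCancelAdd R] {e a s : R} (hs : e * s = s) (hea : e + a = 1) : a * s = 0 := by
  have h_add : s + a * s = s := by
    simpa only [add_mul, hs, one_mul] using congrArg (· * s) hea
  exact add_eq_left.mp h_add

theorem mul_eq_zero_of_star_mul_self_mul_eq_zero {R : Type*} [SemigroupWithZero R] [StarMul R]
    (h_proper : ∀ a : R, star a * a = 0 → a = 0) {s t : R} (h : star s * s * t = 0) :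
    s * t = 0 := by
  apply h_proper
  calc star (s * t) * (s * t) = star t * (star s * s * t) := by simp only [star_mul, mul_assoc]
    _ = 0 := by rw [h, mul_zero]

theorem stmt11_general {R ι : Type*} [Semiring R] [IsLeftCancelAdd R] [StarMul R] [Fintype ι]
    (h_proper : ∀ a : R, star a * a = 0 → a = 0) {p : ι → R} {i : ι} {s : R}
    (hp : ∀ j, j ≠ i → p j * p i = 0) (hs : p i * s = s) (h_one : ∑ j, p j + star s * s = 1) :
    s * s = 0 :=
  mul_eq_zero_of_star_mul_self_mul_eq_zero h_proper <|
    mul_eq_zero_of_mul_eq_self_of_add_eq_one (sum_mul_eq_of_mul_eq_zero hp hs) h_one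

/-- Under the relations (R1)–(R4) of the dimension drop algebra
`I_{n,n+1}` (index `⟨0, hn⟩` playing the role of the index `1` of the paper) one has
`s² = 0`. -/
theorem stmt11 {B : Type*} [NormedRing B] [StarRing B] [CStarRing B]
    [NormedAlgebra ℂ B] [CompleteSpace B] [StarModule ℂ B]
    (n : ℕ) (hn : 1 ≤ n) (s : B) (f : Fin n → Fin n → B)
    (hs : ‖s‖ ≤ 1) (hf : ∀ j k, ‖f j k‖ ≤ 1)
    (R1 : ∀ j k, star (f j k) = f k j)
    (R2 : ∀ j k l m, f j k * f l m = if k = l then f j j * f j m else 0)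
    (R3 : f ⟨0, hn⟩ ⟨0, hn⟩ * s = s)
    (R4 : ∑ j, f j j + star s * s = 1) :
    s * s = 0 :=
  stmt11_general (p := fun j => f j j) (fun a => (CStarRing.star_mul_self_eq_zero_iff a).mp)
    (fun j hj => (R2 j j _ _).trans (if_neg hj)) R3 R4
end

section
/- Under the relations (R1)–(R4), the element b = s* s + ∑_{j=1}^n f_{j,1} s s* f_{1,j} is a positive element of norm at most 1 which commutes with s and with every f_{j,k} (1 ≤ j, k ≤ n); moreover s b = b s = s s* s. -/
/-!
Put `a = s* s = 1 - ∑ⱼ f_{j,j}` and let `b = a + ∑ⱼ f_{j,1} (s s*) f_{1,j}`. The sum of the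
`f_{j,j}` commutes with every `f_{j,k}`, hence so does `a`; the second summand spreads `s s*`, which
commutes with `f_{1,1}`, evenly along the diagonal and so commutes with every `f_{j,k}` as well.
Moreover `a s = 0`, since `∑ⱼ f_{j,j}` fixes `s`; therefore `a f_{j,1} s = f_{j,1} a s = 0`, and the
C*-identity upgrades this to `s f_{j,1} s = 0`. So only `a` contributes to `s b`, and only the term
`j = 1` of the sum to `b s`. Finally, `s s* ≤ 1` gives `b ≤ a + ∑ⱼ f_{j,1} f_{1,j}`, which equals
`a + (1 - a)²`, and `a² ≤ a` bounds this by `1`.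
-/

theorem mul_eq_zero_of_star_mul_self_mul_eq_zero_s12 {A : Type*} [NonUnitalNormedRing A] [StarRing A]
    [CStarRing A] {a x : A} (h : star a * a * x = 0) : a * x = 0 := by
  rw [← CStarRing.star_mul_self_eq_zero_iff]
  calc star (a * x) * (a * x) = star x * (star a * a * x) := by simp only [star_mul, mul_assoc]
    _ = 0 := by rw [h, mul_zero]

theorem self_mul_star_le_one_of_norm_le_one {A : Type*} [CStarAlgebra A] [PartialOrder A]
    [StarOrderedRing A] {a : A} (ha : ‖a‖ ≤ 1) : a * star a ≤ 1 := by
  rw [← CStarAlgebra.norm_le_one_iff_of_nonneg _ (mul_star_self_nonneg a),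
    CStarRing.norm_self_mul_star]
  exact mul_le_one₀ ha (norm_nonneg a) ha

/-- The *-algebraic relations (R1) and (R2) satisfied by the images `f j k` of the matrix units
under an order zero map out of a matrix algebra. (R2) is split into its two cases, so that the
index type needs no decidable equality. -/
structure IsOrderZeroMatrixUnits {ι B : Type*} [NonUnitalSemiring B] [Star B] (f : ι → ι → B) :
    Prop where
  star_apply (j k : ι) : star (f j k) = f k j
  mul_apply (j k m : ι) : f j k * f k m = f j j * f j m
  mul_apply_of_ne (j m : ι) {k l : ι} (hkl : k ≠ l) : f j k * f l m = 0

/-- The element `∑ j, f j z * x * f z j`, which for matrix units `f` is the diagonal matrix all of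
whose entries are the corner `f z z * x * f z z` of `x`. -/
def diagonalAmplification {ι B : Type*} [Fintype ι] [NonUnitalSemiring B] (f : ι → ι → B) (z : ι)
    (x : B) : B :=
  ∑ j, f j z * x * f z j

namespace IsOrderZeroMatrixUnits

section Algebra

variable {ι B : Type*} [Fintype ι] [NonUnitalSemiring B] [Star B] {f : ι → ι → B}

theorem sum_diag_mul (hf : IsOrderZeroMatrixUnits f) (j k : ι) :
    (∑ l, f l l) * f j k = f j j * f j k := by
  rw [Finset.sum_mul]
  exact Fintype.sum_eq_single j fun l hl => hf.mul_apply_of_ne l k hl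

theorem mul_sum_diag (hf : IsOrderZeroMatrixUnits f) (j k : ι) :
    f j k * ∑ l, f l l = f j j * f j k := by
  rw [Finset.mul_sum, Fintype.sum_eq_single k fun l hl => hf.mul_apply_of_ne j l hl.symm]
  exact hf.mul_apply j k k

theorem commute_sum_diag (hf : IsOrderZeroMatrixUnits f) (j k : ι) :
    Commute (∑ l, f l l) (f j k) :=
  (hf.sum_diag_mul j k).trans (hf.mul_sum_diag j k).symm

theorem sum_mul_swap (hf : IsOrderZeroMatrixUnits f) (z : ι) :
    ∑ j, f j z * f z j = (∑ j, f j j) * ∑ j, f j j := by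
  rw [Finset.mul_sum]
  refine Finset.sum_congr rfl fun j _ => ?_
  rw [hf.mul_apply, hf.sum_diag_mul]

theorem diagonalAmplification_mul (hf : IsOrderZeroMatrixUnits f) (z : ι) (x : B) (j k : ι) :
    diagonalAmplification f z x * f j k = f j z * x * f z z * f z k := by
  have off_diag (l : ι) (hl : l ≠ j) : f l z * x * f z l * f j k = 0 := by
    rw [mul_assoc, hf.mul_apply_of_ne z k hl, mul_zero]
  rw [diagonalAmplification, Finset.sum_mul, Fintype.sum_eq_single j off_diag, mul_assoc,
    hf.mul_apply, ← mul_assoc]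

theorem mul_diagonalAmplification (hf : IsOrderZeroMatrixUnits f) (z : ι) (x : B) (j k : ι) :
    f j k * diagonalAmplification f z x = f j z * f z z * x * f z k := by
  have off_diag (l : ι) (hl : l ≠ k) : f j k * (f l z * x * f z l) = 0 := by
    simp only [← mul_assoc, hf.mul_apply_of_ne j z hl.symm, zero_mul]
  rw [diagonalAmplification, Finset.mul_sum, Fintype.sum_eq_single k off_diag]
  simp only [← mul_assoc, hf.mul_apply j k z, hf.mul_apply j z z]

theorem commute_diagonalAmplification (hf : IsOrderZeroMatrixUnits f) {z : ι} {x : B}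
    (hx : Commute (f z z) x) (j k : ι) : Commute (diagonalAmplification f z x) (f j k) := by
  rw [commute_iff_eq, hf.diagonalAmplification_mul, hf.mul_diagonalAmplification,
    mul_assoc (f j z) x, mul_assoc (f j z) (f z z), hx.eq]

end Algebra

section Order

variable {ι B : Type*} [Fintype ι] [NonUnitalSemiring B] [PartialOrder B] [StarRing B]
  [StarOrderedRing B] {f : ι → ι → B}

theorem diagonalAmplification_mono (hf : IsOrderZeroMatrixUnits f) (z : ι) :
    Monotone (diagonalAmplification f z) := fun x y hxy =>
  Finset.sum_le_sum fun j _ => by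
    simpa only [hf.star_apply] using star_right_conjugate_le_conjugate hxy (f j z)

theorem diagonalAmplification_nonneg (hf : IsOrderZeroMatrixUnits f) (z : ι) {x : B} (hx : 0 ≤ x) :
    0 ≤ diagonalAmplification f z x := by
  simpa [diagonalAmplification] using hf.diagonalAmplification_mono z hx

end Order

end IsOrderZeroMatrixUnits

/-- The *-algebraic relations (R1)–(R4) on the generators of the dimension drop algebra, for an
arbitrary finite index type with a distinguished index `z`, the index `1` of the paper. -/
structure IsDimensionDropFamily {ι B : Type*} [Fintype ι] [Semiring B] [Star B] (s : B)
    (f : ι → ι → B) (z : ι) : Prop extends IsOrderZeroMatrixUnits f where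
  apply_mul_self : f z z * s = s
  sum_diag_add : ∑ j, f j j + star s * s = 1

/-- The element `b` of the paper, central in the C*-algebra generated by a family satisfying the
dimension drop relations. -/
def dimensionDropCentral {ι B : Type*} [Fintype ι] [NonUnitalSemiring B] [Star B] (s : B)
    (f : ι → ι → B) (z : ι) : B :=
  star s * s + diagonalAmplification f z (s * star s)

namespace IsDimensionDropFamily

section Semiring

variable {ι B : Type*} [Fintype ι] [Semiring B] [StarRing B] {s : B} {f : ι → ι → B} {z : ι}

theorem star_mul_apply (h : IsDimensionDropFamily s f z) : star s * f z z = star s := by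
  simpa only [star_mul, h.star_apply] using congrArg star h.apply_mul_self

theorem apply_mul_of_ne (h : IsDimensionDropFamily s f z) (j : ι) {k : ι} (hk : k ≠ z) :
    f j k * s = 0 := by
  rw [← h.apply_mul_self, ← mul_assoc, h.mul_apply_of_ne j z hk, zero_mul]

theorem sum_diag_mul_self (h : IsDimensionDropFamily s f z) : (∑ j, f j j) * s = s := by
  rw [Finset.sum_mul, Fintype.sum_eq_single z fun j hj => h.apply_mul_of_ne j hj, h.apply_mul_self]

theorem commute_apply_mul_star_self (h : IsDimensionDropFamily s f z) :
    Commute (f z z) (s * star s) := by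
  rw [commute_iff_eq, ← mul_assoc, h.apply_mul_self, mul_assoc, h.star_mul_apply]

end Semiring

section Ring

variable {ι B : Type*} [Fintype ι] [Ring B] [StarRing B] {s : B} {f : ι → ι → B} {z : ι}

theorem star_mul_self_eq (h : IsDimensionDropFamily s f z) : star s * s = 1 - ∑ j, f j j :=
  eq_sub_of_add_eq' h.sum_diag_add

theorem star_mul_self_mul_self (h : IsDimensionDropFamily s f z) : star s * s * s = 0 := by
  rw [h.star_mul_self_eq, sub_mul, one_mul, h.sum_diag_mul_self, sub_self]

theorem commute_star_mul_self (h : IsDimensionDropFamily s f z) (j k : ι) :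
    Commute (star s * s) (f j k) := by
  rw [h.star_mul_self_eq]
  exact (Commute.one_left _).sub_left (h.commute_sum_diag j k)

theorem commute_central (h : IsDimensionDropFamily s f z) (j k : ι) :
    Commute (dimensionDropCentral s f z) (f j k) :=
  (h.commute_star_mul_self j k).add_left
    (h.commute_diagonalAmplification h.commute_apply_mul_star_self j k)

theorem central_mul_self (h : IsDimensionDropFamily s f z) :
    dimensionDropCentral s f z * s = s * star s * s := by
  have off_diag (j : ι) (hj : j ≠ z) : f j z * (s * star s) * f z j * s = 0 := by
    rw [mul_assoc, h.apply_mul_of_ne z hj, mul_zero]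
  rw [dimensionDropCentral, add_mul, h.star_mul_self_mul_self, zero_add, diagonalAmplification,
    Finset.sum_mul, Fintype.sum_eq_single z off_diag, mul_assoc _ (f z z), h.apply_mul_self,
    ← mul_assoc (f z z), h.apply_mul_self]

end Ring

section CStarRing

variable {ι B : Type*} [Fintype ι] [NormedRing B] [StarRing B] [CStarRing B] {s : B}
  {f : ι → ι → B} {z : ι}

theorem self_mul_apply_mul_self (h : IsDimensionDropFamily s f z) (j k : ι) :
    s * (f j k * s) = 0 := by
  apply mul_eq_zero_of_star_mul_self_mul_eq_zero_s12
  rw [← mul_assoc, (h.commute_star_mul_self j k).eq, mul_assoc, h.star_mul_self_mul_self, mul_zero]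

theorem self_mul_central (h : IsDimensionDropFamily s f z) :
    s * dimensionDropCentral s f z = s * star s * s := by
  have self_mul_amplification : s * diagonalAmplification f z (s * star s) = 0 := by
    rw [diagonalAmplification, Finset.mul_sum]
    refine Finset.sum_eq_zero fun j _ => ?_
    calc s * (f j z * (s * star s) * f z j) = s * (f j z * s) * (star s * f z j) := by
          simp only [mul_assoc]
      _ = 0 := by rw [h.self_mul_apply_mul_self, zero_mul]
  rw [dimensionDropCentral, mul_add, self_mul_amplification, add_zero, mul_assoc]

end CStarRing

theorem central_nonneg {ι B : Type*} [Fintype ι] [Semiring B] [PartialOrder B] [StarRing B]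
    [StarOrderedRing B] {s : B} {f : ι → ι → B} {z : ι} (h : IsDimensionDropFamily s f z) :
    0 ≤ dimensionDropCentral s f z :=
  add_nonneg (star_mul_self_nonneg s) (h.diagonalAmplification_nonneg z (mul_star_self_nonneg s))

theorem central_le_one {ι B : Type*} [Fintype ι] [Ring B] [PartialOrder B] [StarRing B]
    [StarOrderedRing B] {s : B} {f : ι → ι → B} {z : ι} (h : IsDimensionDropFamily s f z)
    (hs : s * star s ≤ 1) : dimensionDropCentral s f z ≤ 1 := by
  have amplification_le : diagonalAmplification f z (s * star s) ≤
      (1 - star s * s) * (1 - star s * s) := by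
    calc diagonalAmplification f z (s * star s) ≤ diagonalAmplification f z 1 :=
          h.diagonalAmplification_mono z hs
      _ = (∑ j, f j j) * ∑ j, f j j := by
          simp only [diagonalAmplification, mul_one, h.sum_mul_swap]
      _ = (1 - star s * s) * (1 - star s * s) := by rw [h.star_mul_self_eq, sub_sub_cancel]
  have sq_le : star s * (s * star s) * s ≤ star s * s := by
    simpa only [mul_one] using star_left_conjugate_le_conjugate hs s
  calc dimensionDropCentral s f z ≤ star s * s + (1 - star s * s) * (1 - star s * s) :=
        add_le_add_right amplification_le _
    _ = 1 - (star s * s - star s * (s * star s) * s) := by noncomm_ring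
    _ ≤ 1 := sub_le_self 1 (sub_nonneg.mpr sq_le)

theorem norm_central_le_one {ι B : Type*} [Fintype ι] [CStarAlgebra B] [PartialOrder B]
    [StarOrderedRing B] {s : B} {f : ι → ι → B} {z : ι} (h : IsDimensionDropFamily s f z)
    (hs : ‖s‖ ≤ 1) : ‖dimensionDropCentral s f z‖ ≤ 1 :=
  (CStarAlgebra.norm_le_one_iff_of_nonneg _ h.central_nonneg).mpr
    (h.central_le_one (self_mul_star_le_one_of_norm_le_one hs))

end IsDimensionDropFamily

/-- Under the relations (R1)–(R4) of the dimension drop algebra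
`I_{n,n+1}` (index `⟨0, hn⟩` playing the role of the index `1` of the paper), the element
`b = s* s + ∑ⱼ f_{j,1} s s* f_{1,j}` is a positive element of norm at most `1` which
commutes with `s` and with every `f j k`; moreover `s b = b s = s s* s`. -/
theorem stmt12 {B : Type*} [NormedRing B] [StarRing B] [CStarRing B]
    [NormedAlgebra ℂ B] [CompleteSpace B] [StarModule ℂ B]
    (n : ℕ) (hn : 1 ≤ n) (s : B) (f : Fin n → Fin n → B)
    (hs : ‖s‖ ≤ 1) (hf : ∀ j k, ‖f j k‖ ≤ 1)
    (R1 : ∀ j k, star (f j k) = f k j)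
    (R2 : ∀ j k l m, f j k * f l m = if k = l then f j j * f j m else 0)
    (R3 : f ⟨0, hn⟩ ⟨0, hn⟩ * s = s)
    (R4 : ∑ j, f j j + star s * s = 1)
    (b : B) (hb : b = star s * s + ∑ j, f j ⟨0, hn⟩ * s * star s * f ⟨0, hn⟩ j) :
    (∃ c : B, b = star c * c) ∧ ‖b‖ ≤ 1 ∧
      (b * s = s * b) ∧ (∀ j k, b * f j k = f j k * b) ∧
      s * b = s * star s * s ∧ b * s = s * star s * s := by
  let _ : CStarAlgebra B := {}
  let _ : PartialOrder B := CStarAlgebra.spectralOrder B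
  have : StarOrderedRing B := CStarAlgebra.spectralOrderedRing B
  have h : IsDimensionDropFamily s f ⟨0, hn⟩ :=
    { star_apply := R1
      mul_apply := fun j k m => by rw [R2, if_pos rfl]
      mul_apply_of_ne := fun j m _ _ hkl => by rw [R2, if_neg hkl]
      apply_mul_self := R3
      sum_diag_add := R4 }
  obtain rfl : b = dimensionDropCentral s f ⟨0, hn⟩ := by
    simp only [hb, dimensionDropCentral, diagonalAmplification, mul_assoc]
  exact ⟨CStarAlgebra.nonneg_iff_eq_star_mul_self.mp h.central_nonneg, h.norm_central_le_one hs,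
    h.central_mul_self.trans h.self_mul_central.symm, fun j k => h.commute_central j k,
    h.self_mul_central, h.central_mul_self⟩
end

section
/- Assume the relations (R1)–(R4) and suppose in addition that b = t·1 for some real number t. Then s f_{1,1}² s* = (1 − t) · s f_{1,1} s*. -/
/-!
Write `e = f₁₁`. Since `s* e = s*`, multiplying (R4) on the left by `s*` kills every `fⱼⱼ` with
`j ≠ 1` and gives `s* s* s = 0`. Multiplying `b = t·1` on the left by `s*` then leaves
`s* s s* = t s*`: up to a scalar, `s` is a partial isometry. On the other hand `e` times (R4) is
`e² = e - e s* s`, so `s e² s* = s e s* - s e (s* s s*) = (1 - t) s e s*`. In a general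
ring, the role of `s*` is played by an element `r` with `r e = r`.
-/

section Ring

variable {ι R B : Type*} [Fintype ι] [CommRing R] [Ring B] [Algebra R B]

theorem mul_sum_eq_mul_of_mul_eq_zero {a : B} {g : ι → B} {o : ι}
    (h : ∀ j, j ≠ o → a * g j = 0) : a * ∑ j, g j = a * g o := by
  rw [Finset.mul_sum, Fintype.sum_eq_single o h]

theorem mul_self_add_mul_eq_of_sum_add_eq_one {p : ι → B} {o : ι} {x : B}
    (horth : ∀ j, j ≠ o → p o * p j = 0) (hsum : ∑ j, p j + x = 1) :
    p o * p o + p o * x = p o := by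
  rw [← mul_sum_eq_mul_of_mul_eq_zero horth, ← mul_add, hsum, mul_one]

theorem mul_eq_zero_of_sum_add_eq_one {p : ι → B} {o : ι} {r x : B}
    (horth : ∀ j, j ≠ o → p o * p j = 0) (hr : r * p o = r) (hsum : ∑ j, p j + x = 1) :
    r * x = 0 := by
  have h : r * (p o * p o + p o * x) = r * p o :=
    congrArg (r * ·) (mul_self_add_mul_eq_of_sum_add_eq_one horth hsum)
  simpa only [mul_add, ← mul_assoc, hr, add_eq_left] using h

variable {f : ι → ι → B} {o : ι} {s r : B} {t : R}

theorem mul_sum_conj_eq (horth : ∀ j k, j ≠ o → f o o * f j k = 0)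
    (hs : f o o * s = s) (hr : r * f o o = r) :
    r * ∑ j, f j o * s * r * f o j = r * s * r := by
  have hvanish (j : ι) (hj : j ≠ o) : r * (f j o * s * r * f o j) = 0 := by
    calc r * (f j o * s * r * f o j)
        = r * (f o o * f j o) * (s * r * f o j) := by
          nth_rw 1 [← hr]; simp only [mul_assoc]
      _ = 0 := by rw [horth j o hj, mul_zero, zero_mul]
  rw [mul_sum_eq_mul_of_mul_eq_zero hvanish, hs, mul_assoc s, hr, mul_assoc]

theorem mul_mul_self_eq_smul (horth : ∀ j k, j ≠ o → f o o * f j k = 0)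
    (hs : f o o * s = s) (hr : r * f o o = r) (hsum : ∑ j, f j j + r * s = 1)
    (hb : r * s + ∑ j, f j o * s * r * f o j = t • (1 : B)) :
    r * s * r = t • r := by
  have hrrs : r * (r * s) = 0 :=
    mul_eq_zero_of_sum_add_eq_one (p := fun j ↦ f j j) (fun j hj ↦ horth j j hj) hr hsum
  calc r * s * r = r * (r * s + ∑ j, f j o * s * r * f o j) := by
        rw [mul_add, hrrs, zero_add, mul_sum_conj_eq horth hs hr]
    _ = t • r := by rw [hb, mul_smul_comm, mul_one]

theorem stmt13_general (horth : ∀ j k, j ≠ o → f o o * f j k = 0)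
    (hs : f o o * s = s) (hr : r * f o o = r) (hsum : ∑ j, f j j + r * s = 1)
    (hb : r * s + ∑ j, f j o * s * r * f o j = t • (1 : B)) :
    s * (f o o * f o o) * r = (1 - t) • (s * f o o * r) := by
  have hsq : f o o * f o o = f o o - f o o * (r * s) :=
    eq_sub_of_add_eq <|
      mul_self_add_mul_eq_of_sum_add_eq_one (p := fun j ↦ f j j) (fun j hj ↦ horth j j hj) hsum
  calc s * (f o o * f o o) * r = s * f o o * r - s * f o o * (r * s * r) := by
        rw [hsq]; noncomm_ring
    _ = (1 - t) • (s * f o o * r) := by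
        rw [mul_mul_self_eq_smul horth hs hr hsum hb, mul_smul_comm, sub_smul, one_smul]

end Ring

/-- Under the relations (R1)–(R4) of the dimension drop algebra
`I_{n,n+1}` (index `⟨0, hn⟩` playing the role of the index `1` of the paper), if moreover
`b = s* s + ∑ⱼ f_{j,1} s s* f_{1,j}` equals `t·1` for a real number `t`, then
`s f_{1,1}² s* = (1 − t) · s f_{1,1} s*`. -/
theorem stmt13 {B : Type*} [NormedRing B] [StarRing B] [CStarRing B]
    [NormedAlgebra ℂ B] [CompleteSpace B] [StarModule ℂ B]
    (n : ℕ) (hn : 1 ≤ n) (s : B) (f : Fin n → Fin n → B)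
    (hs : ‖s‖ ≤ 1) (hf : ∀ j k, ‖f j k‖ ≤ 1)
    (R1 : ∀ j k, star (f j k) = f k j)
    (R2 : ∀ j k l m, f j k * f l m = if k = l then f j j * f j m else 0)
    (R3 : f ⟨0, hn⟩ ⟨0, hn⟩ * s = s)
    (R4 : ∑ j, f j j + star s * s = 1)
    (t : ℝ)
    (hb : star s * s + ∑ j, f j ⟨0, hn⟩ * s * star s * f ⟨0, hn⟩ j = (t : ℂ) • 1) :
    s * (f ⟨0, hn⟩ ⟨0, hn⟩ * f ⟨0, hn⟩ ⟨0, hn⟩) * star s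
      = ((1 - t : ℝ) : ℂ) • (s * f ⟨0, hn⟩ ⟨0, hn⟩ * star s) := by
  have hr : star s * f ⟨0, hn⟩ ⟨0, hn⟩ = star s := by
    simpa only [star_mul, R1] using congrArg star R3
  rw [Complex.ofReal_sub, Complex.ofReal_one]
  exact stmt13_general (fun j k hj ↦ by rw [R2, if_neg hj.symm]) R3 hr R4 hb
end

section
/- Assume the relations (R1)–(R4) and suppose in addition that b = 1. Then s s* = f_{1,1}; both s* s and s s* are projections and (s* s)(s s*) = 0; each f_{j,j} is a projection; and f_{j,k} f_{l,m} = δ_{k,l} f_{j,m} for all 1 ≤ j, k, l, m ≤ n. -/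
/-!
Over a proper involution, `x a a* = y a a*` implies `x a = y a`. Multiplying the equality of
`∑ⱼ f_{j,j}` and `∑ⱼ f_{j,1} s s* f_{1,j}` by `f_{1,1}` on the left gives `f_{1,1}² = s s*`, hence
`f_{1,1}³ = f_{1,1}²`, and cancellation yields `f_{1,1} = f_{1,1}² = s s*`. Now `s` is a partial
isometry, so `∑ⱼ f_{j,j} = 1 - s* s` is idempotent. Multiplying by `f_{j,j}` gives
`f_{j,j}³ = f_{j,j}²`, so `f_{j,j}` is a projection by the same cancellation. Finally
`f_{j,k} f_{j,k}* = f_{j,j}² = f_{j,j}`, and one more cancellation gives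
`f_{j,j} f_{j,k} = f_{j,k}`.
-/

/-- The involution of `R` is proper (as it is in every C*-algebra). This is usually stated as
`star a * a = 0 → a = 0`; replacing `a` by `star a` gives the equivalent form used here. -/
def IsProperInvolution (R : Type*) [NonUnitalRing R] [StarRing R] : Prop :=
  ∀ ⦃a : R⦄, a * star a = 0 → a = 0

namespace IsProperInvolution

lemma mul_right_cancel_of_mul_star_self {R : Type*} [NonUnitalRing R] [StarRing R]
    (hR : IsProperInvolution R) {a x y : R} (h : x * (a * star a) = y * (a * star a)) :
    x * a = y * a := by
  refine sub_eq_zero.mp (hR ?_)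
  calc (x * a - y * a) * star (x * a - y * a)
      = (x * (a * star a) - y * (a * star a)) * star (x - y) := by
        simp only [← sub_mul, star_mul, mul_assoc]
    _ = 0 := by rw [h, sub_self, zero_mul]

lemma isStarProjection_of_cube_eq_sq {R : Type*} [Ring R] [StarRing R]
    (hR : IsProperInvolution R) {a : R} (ha : IsSelfAdjoint a) (h : a * (a * a) = a * a) :
    IsStarProjection a where
  isSelfAdjoint := ha
  isIdempotentElem := by
    simpa only [IsIdempotentElem, one_mul] using
      hR.mul_right_cancel_of_mul_star_self (a := a) (x := a) (y := 1)
        (by rw [ha.star_eq, h, one_mul])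

end IsProperInvolution

lemma isStarProjection_star_mul_self_of_mul_star_mul_self {R : Type*} [Semigroup R] [StarMul R]
    {s : R} (h : s * star s * s = s) : IsStarProjection (star s * s) where
  isSelfAdjoint := .star_mul_self s
  isIdempotentElem := by rw [IsIdempotentElem, mul_assoc, ← mul_assoc s, h]

/-- The relations (R1) and (R2): those satisfied by the images of the elements `t ⊗ e_{j,k}` of
the cone `C₀(0, 1] ⊗ Mₙ` over a matrix algebra. They become the matrix unit relations once the
diagonal entries are projections. -/
structure IsConeMatrixUnits {R ι : Type*} [NonUnitalSemiring R] [StarRing R] [DecidableEq ι]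
    (f : ι → ι → R) : Prop where
  star_apply (j k : ι) : star (f j k) = f k j
  mul_apply (j k l m : ι) : f j k * f l m = if k = l then f j j * f j m else 0

namespace IsConeMatrixUnits

variable {R ι : Type*} [DecidableEq ι] {f : ι → ι → R}

section NonUnital

variable [NonUnitalSemiring R] [StarRing R]

lemma isSelfAdjoint_diag (hf : IsConeMatrixUnits f) (j : ι) : IsSelfAdjoint (f j j) :=
  hf.star_apply j j

lemma star_mul_diag (hf : IsConeMatrixUnits f) {o : ι} {s : R} (hs : f o o * s = s) :
    star s * f o o = star s := by
  rw [← hf.star_apply o o, ← star_mul, hs]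

lemma mul_apply_of_ne (hf : IsConeMatrixUnits f) {k l : ι} (hkl : k ≠ l) (j m : ι) :
    f j k * f l m = 0 := by
  rw [hf.mul_apply, if_neg hkl]

lemma mul_star_apply (hf : IsConeMatrixUnits f) (j k : ι) :
    f j k * star (f j k) = f j j * f j j := by
  rw [hf.star_apply, hf.mul_apply, if_pos rfl]

variable [Fintype ι]

lemma diag_mul_sum_diag (hf : IsConeMatrixUnits f) (j : ι) :
    f j j * ∑ k, f k k = f j j * f j j := by
  rw [Finset.mul_sum]
  exact Fintype.sum_eq_single j fun k hk ↦ hf.mul_apply_of_ne hk.symm j k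

lemma sum_diag_mul_diag (hf : IsConeMatrixUnits f) (j : ι) :
    (∑ k, f k k) * f j j = f j j * f j j := by
  rw [Finset.sum_mul]
  exact Fintype.sum_eq_single j fun k hk ↦ hf.mul_apply_of_ne hk k j

lemma diag_mul_sum_conj (hf : IsConeMatrixUnits f) (o : ι) (x : R) :
    f o o * ∑ j, f j o * x * f o j = f o o * f o o * x * f o o := by
  simp only [Finset.mul_sum, ← mul_assoc]
  refine Fintype.sum_eq_single o fun j hj ↦ ?_
  rw [hf.mul_apply_of_ne hj.symm, zero_mul, zero_mul]

lemma diag_mul_diag_eq_mul_star_self (hf : IsConeMatrixUnits f) {o : ι} {s : R}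
    (hs : f o o * s = s) (hsum : ∑ j, f j j = ∑ j, f j o * (s * star s) * f o j) :
    f o o * f o o = s * star s :=
  calc f o o * f o o
      = f o o * ∑ j, f j o * (s * star s) * f o j := by rw [← hsum, hf.diag_mul_sum_diag]
    _ = f o o * (f o o * s) * (star s * f o o) := by
        rw [hf.diag_mul_sum_conj]
        simp only [mul_assoc]
    _ = s * star s := by rw [hf.star_mul_diag hs, hs, hs]

end NonUnital

variable [Ring R] [StarRing R]

lemma mul_apply_of_isStarProjection_diag (hR : IsProperInvolution R) (hf : IsConeMatrixUnits f)
    (hdiag : ∀ j, IsStarProjection (f j j)) (j k l m : ι) :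
    f j k * f l m = if k = l then f j m else 0 := by
  have diag_mul : f j j * f j m = f j m := by
    simpa only [one_mul] using
      hR.mul_right_cancel_of_mul_star_self (a := f j m) (x := f j j) (y := 1)
        (by simp only [hf.mul_star_apply, (hdiag j).isIdempotentElem.eq, one_mul])
  rw [hf.mul_apply, diag_mul]

variable [Fintype ι]

lemma isStarProjection_diag_of_isIdempotentElem_sum (hR : IsProperInvolution R)
    (hf : IsConeMatrixUnits f) (hsum : IsIdempotentElem (∑ j, f j j)) (j : ι) :
    IsStarProjection (f j j) := by
  refine hR.isStarProjection_of_cube_eq_sq (hf.isSelfAdjoint_diag j) ?_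
  calc f j j * (f j j * f j j)
      = f j j * ((∑ k, f k k) * ∑ k, f k k) := by
        rw [← mul_assoc _ (∑ k, f k k), hf.diag_mul_sum_diag, mul_assoc, hf.diag_mul_sum_diag]
    _ = f j j * f j j := by rw [hsum.eq, hf.diag_mul_sum_diag]

lemma mul_star_self_eq_diag (hR : IsProperInvolution R) (hf : IsConeMatrixUnits f) {o : ι} {s : R}
    (hs : f o o * s = s) (hsum : ∑ j, f j j = ∑ j, f j o * (s * star s) * f o j) :
    s * star s = f o o := by
  have sq_eq : f o o * f o o = s * star s := hf.diag_mul_diag_eq_mul_star_self hs hsum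
  have proj : IsStarProjection (f o o) :=
    hR.isStarProjection_of_cube_eq_sq (hf.isSelfAdjoint_diag o)
      (by rw [sq_eq, ← mul_assoc, hs])
  rw [← sq_eq, proj.isIdempotentElem.eq]

end IsConeMatrixUnits

theorem stmt15_general {R ι : Type*} [Ring R] [StarRing R] [Fintype ι] [DecidableEq ι]
    (hR : IsProperInvolution R) {f : ι → ι → R} (hf : IsConeMatrixUnits f) {o : ι} {s : R}
    (hs : f o o * s = s) (h_one : ∑ j, f j j + star s * s = 1)
    (hb : star s * s + ∑ j, f j o * s * star s * f o j = 1) :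
    s * star s = f o o ∧
      (star (star s * s) = star s * s ∧ (star s * s) * (star s * s) = star s * s) ∧
      (star (s * star s) = s * star s ∧ (s * star s) * (s * star s) = s * star s) ∧
      (star s * s) * (s * star s) = 0 ∧
      (∀ j, star (f j j) = f j j ∧ f j j * f j j = f j j) ∧
      (∀ j k l m, f j k * f l m = if k = l then f j m else 0) := by
  have sum_eq : ∑ j, f j j = ∑ j, f j o * (s * star s) * f o j := by
    simp only [← mul_assoc]
    exact add_left_cancel ((add_comm _ _).trans (h_one.trans hb.symm))
  have range_eq : s * star s = f o o := hf.mul_star_self_eq_diag hR hs sum_eq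
  have source_proj : IsStarProjection (star s * s) :=
    isStarProjection_star_mul_self_of_mul_star_mul_self (by rw [range_eq, hs])
  have source_eq : star s * s = 1 - ∑ j, f j j := eq_sub_of_add_eq' h_one
  have diag_proj : ∀ j, IsStarProjection (f j j) :=
    hf.isStarProjection_diag_of_isIdempotentElem_sum hR
      (IsIdempotentElem.one_sub_iff.mp (source_eq ▸ source_proj.isIdempotentElem))
  have range_proj : IsStarProjection (s * star s) := range_eq ▸ diag_proj o
  have orthogonal : (star s * s) * (s * star s) = 0 := by
    rw [source_eq, range_eq, sub_mul, one_mul, hf.sum_diag_mul_diag,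
      (diag_proj o).isIdempotentElem.eq, sub_self]
  exact ⟨range_eq, (isStarProjection_iff'.mp source_proj).symm,
    (isStarProjection_iff'.mp range_proj).symm, orthogonal,
    fun j ↦ (isStarProjection_iff'.mp (diag_proj j)).symm,
    hf.mul_apply_of_isStarProjection_diag hR diag_proj⟩

/-- Under the relations (R1)–(R4) of the dimension drop algebra
`I_{n,n+1}` (index `⟨0, hn⟩` playing the role of the index `1` of the paper), if moreover
`b = s* s + ∑ⱼ f_{j,1} s s* f_{1,j} = 1`, then `s s* = f_{1,1}`; both `s* s` and `s s*`
are projections with `(s* s)(s s*) = 0`; each `f j j` is a projection; and the `f j k`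
satisfy the matrix unit relations. -/
theorem stmt15 {B : Type*} [NormedRing B] [StarRing B] [CStarRing B]
    [NormedAlgebra ℂ B] [CompleteSpace B] [StarModule ℂ B]
    (n : ℕ) (hn : 1 ≤ n) (s : B) (f : Fin n → Fin n → B)
    (hs : ‖s‖ ≤ 1) (hf : ∀ j k, ‖f j k‖ ≤ 1)
    (R1 : ∀ j k, star (f j k) = f k j)
    (R2 : ∀ j k l m, f j k * f l m = if k = l then f j j * f j m else 0)
    (R3 : f ⟨0, hn⟩ ⟨0, hn⟩ * s = s)
    (R4 : ∑ j, f j j + star s * s = 1)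
    (hb : star s * s + ∑ j, f j ⟨0, hn⟩ * s * star s * f ⟨0, hn⟩ j = 1) :
    s * star s = f ⟨0, hn⟩ ⟨0, hn⟩ ∧
      (star (star s * s) = star s * s ∧ (star s * s) * (star s * s) = star s * s) ∧
      (star (s * star s) = s * star s ∧ (s * star s) * (s * star s) = s * star s) ∧
      (star s * s) * (s * star s) = 0 ∧
      (∀ j, star (f j j) = f j j ∧ f j j * f j j = f j j) ∧
      (∀ j k l m, f j k * f l m = if k = l then f j m else 0) :=
  stmt15_general (fun _ ↦ (CStarRing.mul_star_self_eq_zero_iff _).mp) ⟨R1, R2⟩ R3 R4 hb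
end

section
/- Assume the relations (R1)–(R4) and suppose in addition that b = 1. Define e_k = f_{1,k} for 1 ≤ k ≤ n and e_{n+1} = s. Then: e_1 is a projection; e_k e_j = 0 for all 1 ≤ j ≤ n+1 whenever k ≠ 1; e_k e_j* = δ_{k,j} e_1 for all 1 ≤ j, k ≤ n+1; and ∑_{k=1}^{n+1} e_k* e_k = 1. (These are the universal generator relations for a unital copy of M_{n+1}(ℂ).) -/
/-!
Put `p = f_{1,1}`. Comparing `b = 1` with (R4) gives `∑ⱼ f_{j,j} = ∑ⱼ f_{j,1} s s* f_{1,j}`;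
multiplied on the left by `p`, this collapses to `p² = s s*`, so `p³ = p²` by (R3), and a
self-adjoint element with this property is a projection when `a* a = 0` forces `a = 0`. Hence every
`f_{1,k}` and `s` is a partial isometry with range projection `p`. By (R4) the source projection of
`s` is the complement of `∑ⱼ f_{j,j}`, so `s f_{1,k} = 0` and `f_{1,k} s* = 0` for all `k`.
-/

section ProperInvolution

variable {R : Type*} [NonUnitalRing R] [StarRing R]

theorem eq_zero_of_mul_star_self_eq_zero (proper : ∀ a : R, star a * a = 0 → a = 0)
    {a : R} (ha : a * star a = 0) : a = 0 :=
  star_eq_zero.1 (proper (star a) (by rwa [star_star]))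

theorem isIdempotentElem_of_mul_mul_self_eq (proper : ∀ a : R, star a * a = 0 → a = 0)
    {p : R} (hp : IsSelfAdjoint p) (hcube : p * (p * p) = p * p) : IsIdempotentElem p := by
  refine sub_eq_zero.1 (proper (p * p - p) ?_)
  have hself : star (p * p - p) = p * p - p := by rw [star_sub, star_mul, hp.star_eq]
  have hkill : p * (p * p - p) = 0 := by rw [mul_sub, hcube, sub_self]
  rw [hself, sub_mul, mul_assoc, hkill, mul_zero, sub_zero]

theorem mul_eq_of_mul_star_self_eq (proper : ∀ a : R, star a * a = 0 → a = 0)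
    {a p : R} (hp : IsIdempotentElem p) (ha : a * star a = p) : p * a = a := by
  refine sub_eq_zero.1 (eq_zero_of_mul_star_self_eq_zero proper ?_)
  have hkill : (p * a - a) * star a = 0 := by rw [sub_mul, mul_assoc, ha, hp.eq, sub_self]
  rw [star_sub, star_mul, mul_sub, ← mul_assoc, hkill, zero_mul, sub_zero]

end ProperInvolution

/-- The defining relations (R1)–(R4) of the dimension drop algebra `I_{n,n+1}`, for an arbitrary
finite index type `ι` with a base point `z` in place of `{1, …, n}` and the index `1`. -/
structure DimensionDropRelations {B ι : Type*} [Ring B] [StarRing B] [Fintype ι] [DecidableEq ι]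
    (z : ι) (f : ι → ι → B) (s : B) : Prop where
  star_apply : ∀ j k, star (f j k) = f k j
  apply_mul_apply : ∀ j k l m, f j k * f l m = if k = l then f j j * f j m else 0
  base_mul : f z z * s = s
  sum_add : ∑ j, f j j + star s * s = 1

namespace DimensionDropRelations

variable {B ι : Type*} [Ring B] [StarRing B] [Fintype ι] [DecidableEq ι]
  {z : ι} {f : ι → ι → B} {s : B}

theorem apply_mul_apply_of_ne (h : DimensionDropRelations z f s) {k l : ι} (hkl : k ≠ l)
    (j m : ι) : f j k * f l m = 0 := by
  rw [h.apply_mul_apply, if_neg hkl]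

theorem apply_mul_apply_same (h : DimensionDropRelations z f s) (j k m : ι) :
    f j k * f k m = f j j * f j m := by
  rw [h.apply_mul_apply, if_pos rfl]

theorem star_mul_base (h : DimensionDropRelations z f s) : star s * f z z = star s := by
  simpa only [star_mul, h.star_apply] using congrArg star h.base_mul

theorem apply_mul_sum_apply_mul (h : DimensionDropRelations z f s) (j k : ι) (m : ι → ι)
    (x : ι → B) : f j k * ∑ l, f l (m l) * x l = f j k * (f k (m k) * x k) := by
  rw [Finset.mul_sum]
  refine Fintype.sum_eq_single k fun l hl ↦ ?_
  rw [← mul_assoc, h.apply_mul_apply_of_ne hl.symm, zero_mul]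

theorem apply_mul_sum_diag (h : DimensionDropRelations z f s) (j k : ι) :
    f j k * ∑ l, f l l = f j k * f k k := by
  simpa only [mul_one, id, Pi.one_apply] using h.apply_mul_sum_apply_mul j k id 1

theorem apply_mul_star_mul_self (h : DimensionDropRelations z f s) (j k : ι) :
    f j k * (star s * s) = f j k - f j k * f k k := by
  rw [eq_sub_of_add_eq' h.sum_add, mul_sub, mul_one, h.apply_mul_sum_diag]

theorem base_mul_base_eq_mul_star (h : DimensionDropRelations z f s)
    (hb : star s * s + ∑ j, f j z * s * star s * f z j = 1) :
    f z z * f z z = s * star s := by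
  have hsum : ∑ j, f j j = ∑ j, f j z * (s * star s * f z j) := by
    simpa only [mul_assoc] using
      add_left_cancel ((add_comm _ _).trans (h.sum_add.trans hb.symm))
  calc f z z * f z z = f z z * ∑ j, f j j := (h.apply_mul_sum_diag z z).symm
    _ = f z z * (f z z * (s * star s * f z z)) := by
      rw [hsum, h.apply_mul_sum_apply_mul z z fun _ ↦ z]
    _ = s * star s := by
      rw [mul_assoc s, h.star_mul_base, ← mul_assoc (f z z) s, h.base_mul, ← mul_assoc,
        h.base_mul]

theorem mul_star_eq_base (h : DimensionDropRelations z f s)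
    (proper : ∀ a : B, star a * a = 0 → a = 0)
    (hb : star s * s + ∑ j, f j z * s * star s * f z j = 1) :
    s * star s = f z z := by
  have hsq := h.base_mul_base_eq_mul_star hb
  have hcube : f z z * (f z z * f z z) = f z z * f z z := by rw [hsq, ← mul_assoc, h.base_mul]
  have hp := isIdempotentElem_of_mul_mul_self_eq proper (h.star_apply z z) hcube
  exact hsq.symm.trans hp

theorem base_isIdempotentElem (h : DimensionDropRelations z f s) (hss : s * star s = f z z) :
    IsIdempotentElem (f z z) := by
  calc f z z * f z z = f z z * (s * star s) := by rw [hss]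
    _ = f z z := by rw [← mul_assoc, h.base_mul, hss]

theorem apply_mul_star_apply (h : DimensionDropRelations z f s)
    (hp : IsIdempotentElem (f z z)) (k j : ι) :
    f z k * star (f z j) = if k = j then f z z else 0 := by
  rw [h.star_apply, h.apply_mul_apply, hp.eq]

theorem base_mul_apply (h : DimensionDropRelations z f s)
    (proper : ∀ a : B, star a * a = 0 → a = 0) (hp : IsIdempotentElem (f z z)) (k : ι) :
    f z z * f z k = f z k :=
  mul_eq_of_mul_star_self_eq proper hp (by rw [h.apply_mul_star_apply hp, if_pos rfl])

theorem apply_mul_base (h : DimensionDropRelations z f s)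
    (proper : ∀ a : B, star a * a = 0 → a = 0) (hp : IsIdempotentElem (f z z)) (k : ι) :
    f k z * f z z = f k z := by
  simpa only [star_mul, h.star_apply] using congrArg star (h.base_mul_apply proper hp k)

theorem apply_mul_star_eq_zero (h : DimensionDropRelations z f s)
    (hss : s * star s = f z z) {j k : ι} (hjk : f j k * f k k = f j k) :
    f j k * star s = 0 := by
  calc f j k * star s = f j k * (star s * s) * star s := by
        rw [mul_assoc, mul_assoc (star s), hss, h.star_mul_base]
    _ = 0 := by rw [h.apply_mul_star_mul_self, hjk, sub_self, zero_mul]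

theorem base_row_mul_star_eq_zero (h : DimensionDropRelations z f s)
    (proper : ∀ a : B, star a * a = 0 → a = 0) (hss : s * star s = f z z) (k : ι) :
    f z k * star s = 0 :=
  h.apply_mul_star_eq_zero hss <|
    (h.apply_mul_apply_same z k k).trans (h.base_mul_apply proper (h.base_isIdempotentElem hss) k)

theorem mul_star_base_row_eq_zero (h : DimensionDropRelations z f s)
    (proper : ∀ a : B, star a * a = 0 → a = 0) (hss : s * star s = f z z) (k : ι) :
    s * star (f z k) = 0 := by
  simpa only [star_mul, star_star, star_zero] using
    congrArg star (h.base_row_mul_star_eq_zero proper hss k)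

theorem mul_base_row_eq_zero (h : DimensionDropRelations z f s)
    (proper : ∀ a : B, star a * a = 0 → a = 0) (hss : s * star s = f z z) (k : ι) :
    s * f z k = 0 := by
  have hcol : f k z * star s = 0 :=
    h.apply_mul_star_eq_zero hss (h.apply_mul_base proper (h.base_isIdempotentElem hss) k)
  simpa only [star_mul, star_star, star_zero, h.star_apply] using congrArg star hcol

theorem mul_eq_zero_of_mul_base_eq_zero (h : DimensionDropRelations z f s) {x : B}
    (hx : x * f z z = 0) : x * s = 0 := by
  rw [← h.base_mul, ← mul_assoc, hx, zero_mul]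

theorem sum_star_mul_self_add (h : DimensionDropRelations z f s)
    (proper : ∀ a : B, star a * a = 0 → a = 0)
    (hb : star s * s + ∑ j, f j z * s * star s * f z j = 1) :
    star s * s + ∑ k, star (f z k) * f z k = 1 := by
  have hss := h.mul_star_eq_base proper hb
  have hp := h.base_isIdempotentElem hss
  simpa only [h.star_apply, mul_assoc _ s, hss, h.apply_mul_base proper hp] using hb

end DimensionDropRelations

theorem stmt16_general {B ι κ : Type*} [Ring B] [StarRing B]
    (proper : ∀ a : B, star a * a = 0 → a = 0)
    [Fintype ι] [DecidableEq ι] [Fintype κ] [DecidableEq κ] (φ : Option ι ≃ κ)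
    {z : ι} {f : ι → ι → B} {s : B} (h : DimensionDropRelations z f s)
    (hb : star s * s + ∑ j, f j z * s * star s * f z j = 1)
    (e : κ → B) (he : ∀ k, e (φ (some k)) = f z k) (heNone : e (φ none) = s) :
    (star (e (φ (some z))) = e (φ (some z)) ∧
        e (φ (some z)) * e (φ (some z)) = e (φ (some z))) ∧
      (∀ k j : κ, k ≠ φ (some z) → e k * e j = 0) ∧
      (∀ k j : κ, e k * star (e j) = if k = j then e (φ (some z)) else 0) ∧
      (∑ k, star (e k) * e k = 1) := by
  have hss := h.mul_star_eq_base proper hb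
  have hp := h.base_isIdempotentElem hss
  have hsf := h.mul_base_row_eq_zero proper hss
  simp only [he]
  refine ⟨⟨h.star_apply z z, hp⟩, φ.surjective.forall₂.2 ?_, φ.surjective.forall₂.2 ?_, ?_⟩
  · rintro (_ | k) (_ | j) hk <;> simp only [he, heNone]
    · exact h.mul_eq_zero_of_mul_base_eq_zero (hsf z)
    · exact hsf j
    all_goals have hkz : k ≠ z := fun hkz ↦ hk (hkz ▸ rfl)
    · exact h.mul_eq_zero_of_mul_base_eq_zero (h.apply_mul_apply_of_ne hkz z z)
    · exact h.apply_mul_apply_of_ne hkz z j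
  · rintro (_ | k) (_ | j) <;>
      simp only [he, heNone, φ.injective.eq_iff, reduceCtorEq, Option.some_inj, if_true, if_false]
    · exact hss
    · exact h.mul_star_base_row_eq_zero proper hss j
    · exact h.base_row_mul_star_eq_zero proper hss k
    · exact h.apply_mul_star_apply hp k j
  · simpa only [← φ.sum_comp, Fintype.sum_option, he, heNone] using
      h.sum_star_mul_self_add proper hb

/-- Under the relations (R1)–(R4) of the dimension drop algebra
`I_{n,n+1}` (index `⟨0, hn⟩ : Fin n`, resp. `0 : Fin (n+1)`, playing the role of the
index `1` of the paper), if moreover `b = s* s + ∑ⱼ f_{j,1} s s* f_{1,j} = 1`, then the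
family `e` with `e k = f_{1,k}` for `k ≤ n` and `e_{n+1} = s` satisfies the universal
generator relations of a unital copy of `M_{n+1}(ℂ)`. -/
theorem stmt16 {B : Type*} [NormedRing B] [StarRing B] [CStarRing B]
    [NormedAlgebra ℂ B] [CompleteSpace B] [StarModule ℂ B]
    (n : ℕ) (hn : 1 ≤ n) (s : B) (f : Fin n → Fin n → B)
    (hs : ‖s‖ ≤ 1) (hf : ∀ j k, ‖f j k‖ ≤ 1)
    (R1 : ∀ j k, star (f j k) = f k j)
    (R2 : ∀ j k l m, f j k * f l m = if k = l then f j j * f j m else 0)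
    (R3 : f ⟨0, hn⟩ ⟨0, hn⟩ * s = s)
    (R4 : ∑ j, f j j + star s * s = 1)
    (hb : star s * s + ∑ j, f j ⟨0, hn⟩ * s * star s * f ⟨0, hn⟩ j = 1)
    (e : Fin (n + 1) → B)
    (he : ∀ k : Fin n, e k.castSucc = f ⟨0, hn⟩ k)
    (heLast : e (Fin.last n) = s) :
    (star (e 0) = e 0 ∧ e 0 * e 0 = e 0) ∧
      (∀ k j : Fin (n + 1), k ≠ 0 → e k * e j = 0) ∧
      (∀ k j : Fin (n + 1), e k * star (e j) = if k = j then e 0 else 0) ∧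
      (∑ k, star (e k) * e k = 1) := by
  simpa using stmt16_general (fun _ ↦ (CStarRing.star_mul_self_eq_zero_iff _).1)
    finSuccEquivLast.symm ⟨R1, R2, R3, R4⟩ hb e (by simpa using he) (by simpa using heLast)
end

section
/- Assume the relations (R1)–(R4) and suppose in addition that b = t·1 for some real number t with 0 < t < 1. Define c_{j,k} = (t − t²)^{-1} · s f_{1,j} s* f_{1,k} and d_l = (t^{1/2}(1 − t))^{-1} · s f_{1,l} for 1 ≤ j, k, l ≤ n. Then for all indices: c_{j,k} c_{l,m}* = δ_{k,m} δ_{j,l} c_{1,1}; d_j d_k* = δ_{j,k} c_{1,1}; c_{j,k} d_l* = 0; and d_l c_{j,k}* = 0. In particular c_{1,1} is a projection. -/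
/-!
Write `e = f z z`, where `z` is the index `1` of the paper. Multiplying `b = t • 1` by `s` on the
right gives `s s* s = t s`, and the relations give `s* s s = 0`; hence `t s s = s s* s s = 0`, so
`s s = 0`. Multiplying `b = t • 1` by `e` on the left gives `e e = s s* + (1 - t) e`, so
`s e e = (1 - t) s e`. The products of the `c`'s and `d`'s with their adjoints reduce to
`s e e s*`, `s e e e s*` and `s* s*`, that is, to multiples of `s e s*`.
-/

/-- The relations (R1)–(R4) presenting the dimension drop algebra `I_{n,n+1}`, for elements of an
arbitrary ⋆-ring; `ι` is the set of indices and `z` stands for the index `1` of the paper. -/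
structure DimensionDropRelations_s17 {ι B : Type*} [Fintype ι] [DecidableEq ι] [Ring B] [StarRing B]
    (z : ι) (s : B) (f : ι → ι → B) : Prop where
  star_f : ∀ j k, star (f j k) = f k j
  f_mul_f : ∀ j k l m, f j k * f l m = if k = l then f j j * f j m else 0
  f_mul_s : f z z * s = s
  sum_f_add : ∑ j, f j j + star s * s = 1

namespace DimensionDropRelations_s17

section StarRing

variable {ι B : Type*} [Fintype ι] [Ring B] [StarRing B] {z : ι} {s : B} {f : ι → ι → B}

/-- The element `b` of the paper, which is central in the dimension drop algebra. -/
def centralElement (z : ι) (s : B) (f : ι → ι → B) : B :=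
  star s * s + ∑ j, f j z * s * star s * f z j

variable [DecidableEq ι]

theorem star_s_mul_f (h : DimensionDropRelations_s17 z s f) : star s * f z z = star s := by
  simpa only [star_mul, h.star_f] using congrArg star h.f_mul_s

theorem f_mul_f_same (h : DimensionDropRelations_s17 z s f) (i j k : ι) :
    f i j * f k i = if j = k then f i i * f i i else 0 :=
  h.f_mul_f i j k i

theorem star_s_mul_f_mul_f (h : DimensionDropRelations_s17 z s f) (j k : ι) :
    star s * f z j * f k z = if j = k then star s else 0 := by
  rw [mul_assoc, h.f_mul_f_same, mul_ite, mul_zero, ← mul_assoc, h.star_s_mul_f, h.star_s_mul_f]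

theorem f_mul_star_s_mul_s (h : DimensionDropRelations_s17 z s f) (j k : ι) :
    f j k * (star s * s) = f j k - f j j * f j k := by
  have hsum : f j k * ∑ i, f i i = f j j * f j k := by
    simp [Finset.mul_sum, h.f_mul_f j k]
  rw [← hsum, eq_sub_of_add_eq' h.sum_f_add, mul_sub, mul_one]

theorem star_s_mul_s_mul_f (h : DimensionDropRelations_s17 z s f) (j : ι) :
    star s * s * f j j = f j j - f j j * f j j := by
  simpa only [star_mul, star_sub, star_star, h.star_f]
    using congrArg star (h.f_mul_star_s_mul_s j j)

theorem star_s_mul_s_mul_s (h : DimensionDropRelations_s17 z s f) : star s * s * s = 0 := by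
  calc star s * s * s = star s * s * f z z * s := by rw [mul_assoc _ (f z z), h.f_mul_s]
    _ = 0 := by
      rw [h.star_s_mul_s_mul_f, sub_mul, mul_assoc, h.f_mul_s, h.f_mul_s, sub_self]

theorem f_mul_s_eq_ite (h : DimensionDropRelations_s17 z s f) (j : ι) :
    f z j * s = if j = z then s else 0 := by
  calc f z j * s = f z j * f z z * s := by rw [mul_assoc, h.f_mul_s]
    _ = if j = z then s else 0 := by
      rw [h.f_mul_f_same, ite_mul, mul_assoc, h.f_mul_s, h.f_mul_s, zero_mul]

theorem centralElement_mul_s (h : DimensionDropRelations_s17 z s f) :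
    centralElement z s f * s = s * star s * s := by
  simp [centralElement, add_mul, Finset.sum_mul, mul_assoc _ (f z _), h.f_mul_s_eq_ite,
    h.star_s_mul_s_mul_s]

theorem f_mul_centralElement (h : DimensionDropRelations_s17 z s f) :
    f z z * centralElement z s f = f z z - f z z * f z z + s * star s := by
  have summand (j : ι) :
      f z z * (f j z * s * star s * f z j) = if z = j then s * star s else 0 := by
    calc f z z * (f j z * s * star s * f z j)
        = f z z * f j z * s * star s * f z j := by simp only [mul_assoc]
      _ = if z = j then s * star s else 0 := by
        rw [h.f_mul_f_same]
        split_ifs with hj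
        · subst hj
          rw [mul_assoc (f z z), h.f_mul_s, h.f_mul_s, mul_assoc, h.star_s_mul_f]
        · simp only [zero_mul]
  simp [centralElement, mul_add, Finset.mul_sum, summand, h.f_mul_star_s_mul_s]

end StarRing

section ScalarCentralElement

variable {ι R B : Type*} [Fintype ι] [DecidableEq ι] [CommRing R] [Ring B] [StarRing B]
  [Algebra R B] {z : ι} {s : B} {f : ι → ι → B} {t : R}

theorem s_mul_star_s_mul_s (h : DimensionDropRelations_s17 z s f)
    (hb : centralElement z s f = t • 1) : s * star s * s = t • s := by
  rw [← h.centralElement_mul_s, hb, smul_one_mul]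

theorem s_mul_s (h : DimensionDropRelations_s17 z s f)
    (hb : centralElement z s f = t • 1) (ht : IsUnit t) : s * s = 0 := by
  rw [← ht.smul_eq_zero]
  calc t • (s * s) = s * star s * s * s := by rw [h.s_mul_star_s_mul_s hb, smul_mul_assoc]
    _ = s * (star s * s * s) := by simp only [mul_assoc]
    _ = 0 := by rw [h.star_s_mul_s_mul_s, mul_zero]

theorem f_mul_f_eq_add (h : DimensionDropRelations_s17 z s f)
    (hb : centralElement z s f = t • 1) :
    f z z * f z z = s * star s + (1 - t) • f z z := by
  have hfb : t • f z z = f z z - f z z * f z z + s * star s := by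
    rw [← h.f_mul_centralElement, hb, mul_smul_one]
  rw [sub_smul, one_smul, hfb]
  abel

theorem s_mul_f_mul_f (h : DimensionDropRelations_s17 z s f)
    (hb : centralElement z s f = t • 1) (ht : IsUnit t) :
    s * f z z * f z z = (1 - t) • (s * f z z) := by
  rw [mul_assoc, h.f_mul_f_eq_add hb, mul_add, ← mul_assoc, h.s_mul_s hb ht, zero_mul, zero_add,
    mul_smul_comm]

theorem s_mul_f_mul_f_mul_star_s (h : DimensionDropRelations_s17 z s f)
    (hb : centralElement z s f = t • 1) (ht : IsUnit t) (j k : ι) :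
    s * f z j * (f k z * star s) = if j = k then (1 - t) • (s * f z z * star s) else 0 := by
  calc s * f z j * (f k z * star s) = s * (f z j * f k z) * star s := by simp only [mul_assoc]
    _ = if j = k then (1 - t) • (s * f z z * star s) else 0 := by
      rw [h.f_mul_f_same, mul_ite, ite_mul, ← mul_assoc s, h.s_mul_f_mul_f hb ht, smul_mul_assoc,
        mul_zero, zero_mul]

theorem star_s_mul_f_mul_f_mul_star_s (h : DimensionDropRelations_s17 z s f)
    (hb : centralElement z s f = t • 1) (ht : IsUnit t) (j k : ι) :
    star s * f z j * (f k z * star s) = 0 := by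
  have star_s_mul_star_s : star s * star s = 0 := by
    rw [← star_mul, h.s_mul_s hb ht, star_zero]
  rw [← mul_assoc, h.star_s_mul_f_mul_f, ite_mul, star_s_mul_star_s, zero_mul, ite_self]

theorem s_mul_f_mul_star_s_mul_s_mul_f_mul_star_s (h : DimensionDropRelations_s17 z s f)
    (hb : centralElement z s f = t • 1) (ht : IsUnit t) (j k : ι) :
    s * f z j * (star s * s) * (f k z * star s) =
      if j = k then (t - t ^ 2) • (s * f z z * star s) else 0 := by
  calc s * f z j * (star s * s) * (f k z * star s)
      = s * f z j * (f k z * star s) - s * f z z * (f z j * f k z) * star s := by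
        rw [mul_assoc s, h.f_mul_star_s_mul_s]
        simp only [mul_sub, sub_mul, mul_assoc]
    _ = if j = k then (t - t ^ 2) • (s * f z z * star s) else 0 := by
        rw [h.s_mul_f_mul_f_mul_star_s hb ht, h.f_mul_f_same]
        split_ifs
        · simp only [← mul_assoc, h.s_mul_f_mul_f hb ht, smul_mul_assoc]
          module
        · simp only [mul_zero, zero_mul, sub_zero]

end ScalarCentralElement

section Normalized

variable {ι 𝕜 B : Type*} [Field 𝕜] [Ring B] [StarRing B] [Algebra 𝕜 B]
  {z : ι} {s : B} {f : ι → ι → B} {t r : 𝕜}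

/-- The element `c_{j,k}` of the paper. -/
def cElement (z : ι) (s : B) (f : ι → ι → B) (t : 𝕜) (j k : ι) : B :=
  (t - t ^ 2)⁻¹ • (s * f z j * star s * f z k)

/-- The element `d_l` of the paper; the parameter `r` stands for the square root of `t`. -/
def dElement (z : ι) (s : B) (f : ι → ι → B) (t r : 𝕜) (l : ι) : B :=
  (r * (1 - t))⁻¹ • (s * f z l)

variable [Fintype ι] [DecidableEq ι]

theorem cElement_self (h : DimensionDropRelations_s17 z s f) :
    cElement z s f t z z = (t - t ^ 2)⁻¹ • (s * f z z * star s) := by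
  rw [cElement, mul_assoc _ (star s), h.star_s_mul_f]

variable [StarRing 𝕜] [StarModule 𝕜 B]

theorem star_cElement (h : DimensionDropRelations_s17 z s f) (ht : IsSelfAdjoint t) (j k : ι) :
    star (cElement z s f t j k) = (t - t ^ 2)⁻¹ • (f k z * s * (f j z * star s)) := by
  simp only [cElement, star_smul, star_inv₀, star_sub, star_pow, ht.star_eq, star_mul, star_star,
    h.star_f, mul_assoc]

theorem star_dElement (h : DimensionDropRelations_s17 z s f) (ht : IsSelfAdjoint t)
    (hr : IsSelfAdjoint r) (l : ι) :
    star (dElement z s f t r l) = (r * (1 - t))⁻¹ • (f l z * star s) := by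
  rw [dElement, star_smul, star_inv₀, star_mul', star_sub, star_one, ht.star_eq, hr.star_eq,
    star_mul, h.star_f]

theorem cElement_mul_star_cElement (h : DimensionDropRelations_s17 z s f)
    (hb : centralElement z s f = t • 1) (ht : IsSelfAdjoint t) (ht0 : t ≠ 0) (ht1 : t ≠ 1)
    (j k l m : ι) :
    cElement z s f t j k * star (cElement z s f t l m) =
      if k = m ∧ j = l then cElement z s f t z z else 0 := by
  have factor_ne_zero : t - t ^ 2 ≠ 0 := by
    rw [show t - t ^ 2 = t * (1 - t) by ring]
    exact mul_ne_zero ht0 (sub_ne_zero.mpr ht1.symm)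
  have regroup : s * f z j * star s * f z k * (f m z * s * (f l z * star s)) =
      s * f z j * (star s * f z k * f m z * s) * (f l z * star s) := by
    simp only [mul_assoc]
  rw [h.star_cElement ht, cElement, smul_mul_smul_comm, regroup, h.star_s_mul_f_mul_f, ite_mul,
    zero_mul, mul_ite, mul_zero, ite_mul, zero_mul,
    h.s_mul_f_mul_star_s_mul_s_mul_f_mul_star_s hb ht0.isUnit, ← ite_and, smul_ite, smul_zero,
    smul_smul, inv_mul_cancel_right₀ factor_ne_zero, h.cElement_self]

theorem dElement_mul_star_dElement (h : DimensionDropRelations_s17 z s f)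
    (hb : centralElement z s f = t • 1) (hr : IsSelfAdjoint r) (hrt : r ^ 2 = t)
    (ht0 : t ≠ 0) (ht1 : t ≠ 1) (j k : ι) :
    dElement z s f t r j * star (dElement z s f t r k) =
      if j = k then cElement z s f t z z else 0 := by
  have factor : (r * (1 - t))⁻¹ * (r * (1 - t))⁻¹ * (1 - t) = (t - t ^ 2)⁻¹ := by
    have : 1 - t ≠ 0 := sub_ne_zero.mpr ht1.symm
    rw [show t - t ^ 2 = r ^ 2 * (1 - t) by rw [hrt]; ring]
    field_simp
  rw [h.star_dElement (hrt ▸ hr.pow 2) hr, dElement, smul_mul_smul_comm,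
    h.s_mul_f_mul_f_mul_star_s hb ht0.isUnit, smul_ite, smul_zero, smul_smul, factor,
    h.cElement_self]

theorem cElement_mul_star_dElement (h : DimensionDropRelations_s17 z s f)
    (hb : centralElement z s f = t • 1) (ht : IsSelfAdjoint t) (hr : IsSelfAdjoint r)
    (ht0 : t ≠ 0) (j k l : ι) :
    cElement z s f t j k * star (dElement z s f t r l) = 0 := by
  rw [h.star_dElement ht hr, cElement, smul_mul_smul_comm, mul_assoc (s * f z j), mul_assoc,
    h.star_s_mul_f_mul_f_mul_star_s hb ht0.isUnit, mul_zero, smul_zero]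

theorem isStarProjection_cElement_self (h : DimensionDropRelations_s17 z s f)
    (hb : centralElement z s f = t • 1) (ht : IsSelfAdjoint t) (ht0 : t ≠ 0) (ht1 : t ≠ 1) :
    IsStarProjection (cElement z s f t z z) := by
  have mul_star : cElement z s f t z z * star (cElement z s f t z z) = cElement z s f t z z := by
    simpa only [and_self, if_true] using h.cElement_mul_star_cElement hb ht ht0 ht1 z z z z
  have self_adjoint : IsSelfAdjoint (cElement z s f t z z) :=
    mul_star ▸ IsSelfAdjoint.mul_star_self _
  rw [self_adjoint.star_eq] at mul_star
  exact ⟨mul_star, self_adjoint⟩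

end Normalized

end DimensionDropRelations_s17

open DimensionDropRelations_s17 in
theorem stmt17_general {ι 𝕜 B : Type*} [Fintype ι] [DecidableEq ι] [Field 𝕜] [StarRing 𝕜]
    [Ring B] [StarRing B] [Algebra 𝕜 B] [StarModule 𝕜 B] {z : ι} {s : B} {f : ι → ι → B}
    (h : DimensionDropRelations_s17 z s f) {t r : 𝕜} (ht0 : t ≠ 0) (ht1 : t ≠ 1)
    (hr : IsSelfAdjoint r) (hrt : r ^ 2 = t) (hb : centralElement z s f = t • 1)
    {c : ι → ι → B} {d : ι → B}
    (hc : ∀ j k, c j k = (t - t ^ 2)⁻¹ • (s * f z j * star s * f z k))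
    (hd : ∀ l, d l = (r * (1 - t))⁻¹ • (s * f z l)) :
    (∀ j k l m, c j k * star (c l m) = if k = m ∧ j = l then c z z else 0) ∧
      (∀ j k, d j * star (d k) = if j = k then c z z else 0) ∧
      (∀ j k l, c j k * star (d l) = 0) ∧
      (∀ j k l, d l * star (c j k) = 0) ∧
      (star (c z z) = c z z ∧ c z z * c z z = c z z) := by
  obtain rfl : c = cElement z s f t := funext₂ hc
  obtain rfl : d = dElement z s f t r := funext hd
  have ht : IsSelfAdjoint t := hrt ▸ hr.pow 2
  have c_mul_star_d := h.cElement_mul_star_dElement hb ht hr ht0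
  have projection := h.isStarProjection_cElement_self hb ht ht0 ht1
  refine ⟨h.cElement_mul_star_cElement hb ht ht0 ht1,
    h.dElement_mul_star_dElement hb hr hrt ht0 ht1, c_mul_star_d, fun j k l ↦ ?_,
    projection.isSelfAdjoint, projection.isIdempotentElem⟩
  simpa only [star_mul, star_star, star_zero] using congrArg star (c_mul_star_d j k l)

/-- Under the relations (R1)–(R4) of the dimension drop algebra
`I_{n,n+1}` (index `⟨0, hn⟩` playing the role of the index `1` of the paper), if moreover
`b = s* s + ∑ⱼ f_{j,1} s s* f_{1,j} = t·1` with `0 < t < 1`, then the elements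
`c j k = (t − t²)⁻¹ s f_{1,j} s* f_{1,k}` and `d l = (√t (1 − t))⁻¹ s f_{1,l}` satisfy
`c_{j,k} c_{l,m}* = δ_{k,m} δ_{j,l} c_{1,1}`, `d_j d_k* = δ_{j,k} c_{1,1}`,
`c_{j,k} d_l* = 0`, `d_l c_{j,k}* = 0`; in particular `c_{1,1}` is a projection. -/
theorem stmt17 {B : Type*} [NormedRing B] [StarRing B] [CStarRing B]
    [NormedAlgebra ℂ B] [CompleteSpace B] [StarModule ℂ B]
    (n : ℕ) (hn : 1 ≤ n) (s : B) (f : Fin n → Fin n → B)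
    (hs : ‖s‖ ≤ 1) (hf : ∀ j k, ‖f j k‖ ≤ 1)
    (R1 : ∀ j k, star (f j k) = f k j)
    (R2 : ∀ j k l m, f j k * f l m = if k = l then f j j * f j m else 0)
    (R3 : f ⟨0, hn⟩ ⟨0, hn⟩ * s = s)
    (R4 : ∑ j, f j j + star s * s = 1)
    (t : ℝ) (ht0 : 0 < t) (ht1 : t < 1)
    (hb : star s * s + ∑ j, f j ⟨0, hn⟩ * s * star s * f ⟨0, hn⟩ j = (t : ℂ) • 1)
    (c : Fin n → Fin n → B) (d : Fin n → B)
    (hc : ∀ j k, c j k = ((t - t ^ 2 : ℝ) : ℂ)⁻¹ • (s * f ⟨0, hn⟩ j * star s * f ⟨0, hn⟩ k))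
    (hd : ∀ l, d l = ((Real.sqrt t * (1 - t) : ℝ) : ℂ)⁻¹ • (s * f ⟨0, hn⟩ l)) :
    (∀ j k l m, c j k * star (c l m) = if k = m ∧ j = l then c ⟨0, hn⟩ ⟨0, hn⟩ else 0) ∧
      (∀ j k, d j * star (d k) = if j = k then c ⟨0, hn⟩ ⟨0, hn⟩ else 0) ∧
      (∀ j k l, c j k * star (d l) = 0) ∧
      (∀ j k l, d l * star (c j k) = 0) ∧
      (star (c ⟨0, hn⟩ ⟨0, hn⟩) = c ⟨0, hn⟩ ⟨0, hn⟩ ∧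
        c ⟨0, hn⟩ ⟨0, hn⟩ * c ⟨0, hn⟩ ⟨0, hn⟩ = c ⟨0, hn⟩ ⟨0, hn⟩) := by
  have hsqrt : (√t : ℂ) ^ 2 = t := by exact_mod_cast Real.sq_sqrt ht0.le
  exact stmt17_general ⟨R1, R2, R3, R4⟩ (by exact_mod_cast ht0.ne') (by exact_mod_cast ht1.ne)
    (Complex.conj_ofReal _) hsqrt hb (by simpa using hc) (by simpa using hd)
end
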